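/- arXiv:1908.06878 — 6 statements merged into one kernel-verified Lean document; each statement's English description precedes it below -/
import Mathlib

section
/- Let g ≥ 0 and n ≥ 1. The assignments β_i ↦ s_{g+i} for 1 ≤ i ≤ n−1 and τ_j ↦ A_j := (s_g s_{g−1} ⋯ s_{j+1}) s_j² (s_{j+1}^{−1} s_{j+2}^{−1} ⋯ s_g^{−1}) for 1 ≤ j ≤ g (with A_g = s_g²) extend to a well-defined group homomorphism φ_{g,n} : H_{g,n} → B_{g+n}; that is, the specified images in B_{g+n} satisfy all the defining relations of H_{g,n}. -/
/-!
The Artin braid group `B m` on `m` strands, presented with generators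
`s_1, ..., s_{m-1}` (indexed here by `Fin (m-1)`, with `braidGen k` representing
`s_{k+1}`), and the handlebody braid group `H_{g,n}` presented with braid
generators `β_1, ..., β_{n-1}` and twist generators `τ_1, ..., τ_g`
(indexed by `Fin (n-1)` and `Fin g` respectively).

STATEMENT 0: the assignments `β_i ↦ s_{g+i}` and
`τ_j ↦ (s_g ⋯ s_{j+1}) s_j² (s_{j+1}⁻¹ ⋯ s_g⁻¹)` extend to a group
homomorphism `H_{g,n} →* B_{g+n}`.
-/

/-- The braid relations on `d` generators. -/
def braidRels (d : ℕ) : Set (FreeGroup (Fin d)) :=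
  {r | ∃ i j : Fin d,
    (i.val + 1 = j.val ∧
      r = FreeGroup.of i * FreeGroup.of j * FreeGroup.of i *
          (FreeGroup.of j * FreeGroup.of i * FreeGroup.of j)⁻¹) ∨
    (i.val + 2 ≤ j.val ∧
      r = FreeGroup.of i * FreeGroup.of j * (FreeGroup.of j * FreeGroup.of i)⁻¹)}

/-- The Artin braid group on `m` strands, with generators `s_1, ..., s_{m-1}`. -/
abbrev BraidGroup (m : ℕ) := PresentedGroup (braidRels (m - 1))

/-- The generator `s_{k+1}` of the braid group (`k` is a `0`-based index). -/
def braidGen {m : ℕ} (k : Fin (m - 1)) : BraidGroup m := PresentedGroup.of k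

/-- The defining relations of the handlebody braid group `H_{g,n}`:
the braid relations among the `β`'s, the relations
`β_1 τ_i β_1 τ_i = τ_i β_1 τ_i β_1`, `β_i τ_j = τ_j β_i` for `i ≥ 2`, and
`(β_1 τ_i β_1⁻¹) τ_j = τ_j (β_1 τ_i β_1⁻¹)` for `i < j`.
Here `Sum.inl i` represents `β_{i+1}` and `Sum.inr j` represents `τ_{j+1}`. -/
def handlebodyRels (g n : ℕ) : Set (FreeGroup (Fin (n - 1) ⊕ Fin g)) :=
  {r |
    (∃ i j : Fin (n - 1),
      (i.val + 1 = j.val ∧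
        r = FreeGroup.of (.inl i) * FreeGroup.of (.inl j) * FreeGroup.of (.inl i) *
            (FreeGroup.of (.inl j) * FreeGroup.of (.inl i) * FreeGroup.of (.inl j))⁻¹) ∨
      (i.val + 2 ≤ j.val ∧
        r = FreeGroup.of (.inl i) * FreeGroup.of (.inl j) *
            (FreeGroup.of (.inl j) * FreeGroup.of (.inl i))⁻¹)) ∨
    (∃ (b : Fin (n - 1)) (i : Fin g), b.val = 0 ∧
      r = FreeGroup.of (.inl b) * FreeGroup.of (.inr i) * FreeGroup.of (.inl b) *
            FreeGroup.of (.inr i) *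
          (FreeGroup.of (.inr i) * FreeGroup.of (.inl b) * FreeGroup.of (.inr i) *
            FreeGroup.of (.inl b))⁻¹) ∨
    (∃ (b : Fin (n - 1)) (j : Fin g), 1 ≤ b.val ∧
      r = FreeGroup.of (.inl b) * FreeGroup.of (.inr j) *
          (FreeGroup.of (.inr j) * FreeGroup.of (.inl b))⁻¹) ∨
    (∃ (b : Fin (n - 1)) (i j : Fin g), b.val = 0 ∧ i.val < j.val ∧
      r = (FreeGroup.of (.inl b) * FreeGroup.of (.inr i) * (FreeGroup.of (.inl b))⁻¹) *
            FreeGroup.of (.inr j) *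
          (FreeGroup.of (.inr j) *
            (FreeGroup.of (.inl b) * FreeGroup.of (.inr i) * (FreeGroup.of (.inl b))⁻¹))⁻¹)}

/-- The handlebody braid group `H_{g,n}`. -/
abbrev HandlebodyBraidGroup (g n : ℕ) := PresentedGroup (handlebodyRels g n)

/-- The braid generator `β_{i+1}` of `H_{g,n}`. -/
def hβ {g n : ℕ} (i : Fin (n - 1)) : HandlebodyBraidGroup g n :=
  PresentedGroup.of (Sum.inl i)

/-- The twist generator `τ_{j+1}` of `H_{g,n}`. -/
def hτ {g n : ℕ} (j : Fin g) : HandlebodyBraidGroup g n :=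
  PresentedGroup.of (Sum.inr j)

section helpers
variable {G : Type*} [Group G]

/-- `W s j l = s (j+l) * ... * s (j+1)`. -/
def hbW (s : ℕ → G) (j : ℕ) : ℕ → G
  | 0 => 1
  | l + 1 => s (j + l + 1) * hbW s j l

/-- The conjugated square. -/
def hbA (s : ℕ → G) (j l : ℕ) : G := hbW s j l * s j ^ 2 * (hbW s j l)⁻¹

/-- Braid relations for indices below `d`. -/
structure HbBraid (s : ℕ → G) (d : ℕ) : Prop where
  braid : ∀ k, k + 1 < d → s k * s (k + 1) * s k = s (k + 1) * s k * s (k + 1)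
  comm : ∀ i j, i + 2 ≤ j → j < d → Commute (s i) (s j)

theorem hbW_commute (s : ℕ → G) (x : G) (j l : ℕ)
    (h : ∀ k, j < k → k ≤ j + l → Commute x (s k)) : Commute x (hbW s j l) := by
  induction l with
  | zero => exact Commute.one_right x
  | succ l ih =>
    exact (h (j + l + 1) (by omega) (by omega)).mul_right (ih fun k h1 h2 => h k h1 (by omega))

theorem hbA_commute (s : ℕ → G) (x : G) (j l : ℕ)
    (h : ∀ k, j ≤ k → k ≤ j + l → Commute x (s k)) : Commute x (hbA s j l) := by
  have hW := hbW_commute s x j l fun k h1 h2 => h k h1.le h2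
  exact (hW.mul_right ((h j le_rfl (by omega)).pow_right 2)).mul_right hW.inv_right

theorem hbA_succ (s : ℕ → G) (j l : ℕ) :
    hbA s j (l + 1) = s (j + l + 1) * hbA s j l * (s (j + l + 1))⁻¹ := by
  simp only [hbA, hbW]; group

theorem hbW_shift {s : ℕ → G} {d : ℕ} (hs : HbBraid s d) (j l k : ℕ) (h1 : j < k)
    (h2 : k < j + l) (h3 : j + l < d) : s k * hbW s j l = hbW s j l * s (k + 1) := by
  induction l with
  | zero => omega
  | succ l ih =>
    by_cases hk : k < j + l
    · have := ih hk (by omega)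
      have hc := (hs.comm k (j + l + 1) (by omega) (by omega)).eq
      simp only [hbW]
      rw [← mul_assoc, hc, mul_assoc, this, mul_assoc]
    · obtain rfl : k = j + l := by omega
      obtain ⟨l, rfl⟩ : ∃ l', l = l' + 1 := ⟨l - 1, by omega⟩
      have hc : Commute (s (j + (l + 1) + 1)) (hbW s j l) := hbW_commute _ _ _ _ fun i _ hi =>
        (hs.comm i _ (by omega) (by omega)).symm
      have hb := hs.braid (j + (l + 1)) (by omega)
      simp only [hbW]
      change s (j + (l + 1)) * (s (j + (l + 1) + 1) * (s (j + (l + 1)) * hbW s j l)) =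
        s (j + (l + 1) + 1) * (s (j + (l + 1)) * hbW s j l) * s (j + (l + 1) + 1)
      rw [mul_assoc, mul_assoc, ← hc.eq]
      simp only [← mul_assoc]
      rw [hb]

theorem hbA_commute_gen {s : ℕ → G} {d : ℕ} (hs : HbBraid s d) (j l k : ℕ) (h1 : j < k)
    (h2 : k < j + l) (h3 : j + l < d) : Commute (s k) (hbA s j l) := by
  have h := hbW_shift hs j l k h1 h2 h3
  have hc : Commute (s (k + 1)) (s j ^ 2) :=
    ((hs.comm j (k + 1) (by omega) (by omega)).symm).pow_right 2
  have hk : s k = hbW s j l * s (k + 1) * (hbW s j l)⁻¹ := by rw [← h]; group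
  rw [hk]
  exact (Commute.conj_iff (hbW s j l)).2 hc

theorem hb_rel4 {s : ℕ → G} {d : ℕ} (hs : HbBraid s d) (i j l m : ℕ) (hij : i < j)
    (h : i + l = j + m) (hd : i + l + 1 < d) :
    Commute (s (i + l + 1) * hbA s i l * (s (i + l + 1))⁻¹) (hbA s j m) := by
  rw [← hbA_succ]
  exact hbA_commute _ _ _ _ fun k h1 h2 =>
    (hbA_commute_gen hs i (l + 1) k (by omega) (by omega) (by omega)).symm

theorem hb_step (A b c : G) (hcA : Commute c A) (hbc : b * c * b = c * b * c)
    (h : b * A * b * A = A * b * A * b) :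
    c * (b * A * b⁻¹) * c * (b * A * b⁻¹) = (b * A * b⁻¹) * c * (b * A * b⁻¹) * c := by
  have e1 : b⁻¹ * c * b = c * b * c⁻¹ := by
    rw [mul_assoc, inv_mul_eq_iff_eq_mul, ← mul_assoc, eq_mul_inv_iff_mul_eq, ← mul_assoc] 
    exact hbc.symm
  have e2 : c⁻¹ * b⁻¹ * c = b * c⁻¹ * b⁻¹ := by
    have := congrArg (fun x => x⁻¹) e1
    simp only [mul_inv_rev, inv_inv] at this
    have h3 : c⁻¹ * b⁻¹ * c = c⁻¹ * (b⁻¹ * c * b) * b⁻¹ := by group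
    rw [h3, e1]; group
  have hA : c⁻¹ * A = A * c⁻¹ := hcA.inv_left.eq
  have hA' : c * A = A * c := hcA.eq
  calc c * (b * A * b⁻¹) * c * (b * A * b⁻¹)
      = c * b * A * (b⁻¹ * c * b) * A * b⁻¹ := by group
    _ = c * b * (A * c) * b * (c⁻¹ * A) * b⁻¹ := by rw [e1]; group
    _ = (c * b * c) * A * b * A * c⁻¹ * b⁻¹ := by rw [hA, ← hA']; group
    _ = b * c * (b * A * b * A) * c⁻¹ * b⁻¹ := by rw [← hbc]; group
    _ = b * c * (A * b * A) * (b * c⁻¹ * b⁻¹) := by rw [h]; group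
    _ = b * (c * A) * b * (A * c⁻¹) * b⁻¹ * c := by rw [← e2]; group
    _ = b * A * (c * b * c⁻¹) * A * b⁻¹ * c := by rw [← hA, hA']; group
    _ = (b * A * b⁻¹) * c * (b * A * b⁻¹) * c := by rw [← e1]; group

theorem hb_rel2 {s : ℕ → G} {d : ℕ} (hs : HbBraid s d) (j l : ℕ) (hd : j + l + 1 < d) :
    s (j + l + 1) * hbA s j l * s (j + l + 1) * hbA s j l =
      hbA s j l * s (j + l + 1) * hbA s j l * s (j + l + 1) := by
  induction l with
  | zero =>
    have hb := hs.braid j (by omega)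
    simp only [hbA, hbW, Nat.add_zero, one_mul, inv_one, mul_one]
    generalize s j = a at *
    generalize s (j + 1) = b at *
    calc b * a ^ 2 * b * a ^ 2 = b * a * (a * b * a) * a := by rw [pow_two]; group
      _ = b * a * (b * a * b) * a := by rw [hb]
      _ = (b * a * b) * (a * b * a) := by group
      _ = (a * b * a) * (b * a * b) := by rw [hb]
      _ = a * (b * a * b) * (a * b) := by group
      _ = a * (a * b * a) * (a * b) := by rw [hb]
      _ = a ^ 2 * b * a ^ 2 * b := by rw [pow_two]; group
  | succ l ih =>
    rw [hbA_succ]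
    refine hb_step _ _ _ ?_ (hs.braid (j + l + 1) (by omega)) (ih (by omega))
    exact hbA_commute _ _ _ _ fun k _ hk => (hs.comm k _ (by omega) (by omega)).symm

theorem hbW_list (s : ℕ → G) (j l : ℕ) :
    ((List.range l).map fun t => s (j + l - t)).prod = hbW s j l := by
  induction l with
  | zero => rfl
  | succ l ih =>
    rw [List.range_succ_eq_map, List.map_cons, List.prod_cons, List.map_map, hbW, ← ih]
    congr 3
    funext t
    simp only [Function.comp]
    congr 1
    omega

end helpers

/-- Total version of the braid generators. -/
noncomputable def hbGen (m : ℕ) (k : ℕ) : BraidGroup m :=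
  if h : k < m - 1 then braidGen ⟨k, h⟩ else 1

theorem hbGen_eq {m k : ℕ} (h : k < m - 1) : braidGen (m := m) ⟨k, h⟩ = hbGen m k := by
  simp [hbGen, h]

theorem hbGen_braid (m : ℕ) : HbBraid (hbGen m) (m - 1) where
  braid k h := by
    rw [← hbGen_eq h, ← hbGen_eq (show k < m - 1 by omega)]
    have : _ = (1 : BraidGroup m) := PresentedGroup.one_of_mem (rels := braidRels (m - 1))
      ⟨⟨k, by omega⟩, ⟨k + 1, h⟩, Or.inl ⟨rfl, rfl⟩⟩
    rw [map_mul, map_inv] at this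
    have h2 := mul_inv_eq_one.1 this
    simp only [map_mul] at h2
    exact h2
  comm i j hij h := by
    rw [← hbGen_eq h, ← hbGen_eq (show i < m - 1 by omega)]
    have : _ = (1 : BraidGroup m) := PresentedGroup.one_of_mem (rels := braidRels (m - 1))
      ⟨⟨i, by omega⟩, ⟨j, h⟩, Or.inr ⟨hij, rfl⟩⟩
    rw [map_mul, map_inv] at this
    have h2 := mul_inv_eq_one.1 this
    simp only [map_mul] at h2
    exact h2

/-- for `g ≥ 0` and `n ≥ 1`, the assignments `β_i ↦ s_{g+i}` and
`τ_j ↦ A_j = (s_g s_{g-1} ⋯ s_{j+1}) s_j² (s_{j+1}⁻¹ s_{j+2}⁻¹ ⋯ s_g⁻¹)`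
extend to a well-defined group homomorphism `φ_{g,n} : H_{g,n} →* B_{g+n}`.
(Indices of generators are `0`-based: `braidGen ⟨k, _⟩` is `s_{k+1}`, `hβ i` is
`β_{i+1}` and `hτ j` is `τ_{j+1}`.) -/
theorem handlebody_braid_group_maps_to_braid_group (g n : ℕ) (hn : 1 ≤ n) :
    ∃ φ : HandlebodyBraidGroup g n →* BraidGroup (g + n),
      (∀ i : Fin (n - 1), φ (hβ i) = braidGen ⟨g + i.val, by have := i.isLt; omega⟩) ∧
      (∀ j : Fin g,
        φ (hτ j) =
          (((List.range (g - 1 - j.val)).map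
              (fun t => braidGen (m := g + n) ⟨g - 1 - t, by have := j.isLt; omega⟩)).prod) *
            braidGen (m := g + n) ⟨j.val, by have := j.isLt; omega⟩ ^ 2 *
          (((List.range (g - 1 - j.val)).map
              (fun t => braidGen (m := g + n) ⟨g - 1 - t, by have := j.isLt; omega⟩)).prod)⁻¹) := by
  have hs := hbGen_braid (g + n)
  let f : Fin (n - 1) ⊕ Fin g → BraidGroup (g + n) :=
    Sum.elim (fun i => hbGen (g + n) (g + i.val)) (fun j => hbA (hbGen (g + n)) j.val (g - 1 - j.val))
  have hf : ∀ r ∈ handlebodyRels g n, FreeGroup.lift f r = 1 := by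
    rintro r (⟨i, j, ⟨h, rfl⟩ | ⟨h, rfl⟩⟩ | ⟨b, i, hb, rfl⟩ | ⟨b, j, hb, rfl⟩ | ⟨b, i, j, hb, hij, rfl⟩)
    all_goals
      rw [map_mul, map_inv, mul_inv_eq_one]
      simp only [map_mul, map_inv, FreeGroup.lift_apply_of, f, Sum.elim_inl, Sum.elim_inr]
    · rw [← h]
      exact hs.braid (g + i.val) (by omega)
    · exact hs.comm _ _ (by omega) (by omega)
    · have := hb_rel2 hs i.val (g - 1 - i.val) (by omega)
      rwa [show i.val + (g - 1 - i.val) + 1 = g + b.val by omega] at this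
    · exact hbA_commute _ _ _ _ fun k _ hk => (hs.comm k _ (by omega) (by omega)).symm
    · have := hb_rel4 hs i.val j.val (g - 1 - i.val) (g - 1 - j.val) hij (by omega) (by omega)
      rw [show i.val + (g - 1 - i.val) + 1 = g + b.val by omega] at this
      exact this.eq
  refine ⟨PresentedGroup.toGroup hf, fun i => ?_, fun j => ?_⟩
  · rw [hβ, PresentedGroup.toGroup.of, hbGen_eq]
    rfl
  · rw [hτ, PresentedGroup.toGroup.of]
    simp only [hbGen_eq]
    have := hbW_list (hbGen (g + n)) j.val (g - 1 - j.val)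
    rw [show j.val + (g - 1 - j.val) = g - 1 by omega] at this
    rw [this]
    rfl
end

section
/- Let g ≥ 0 and n ≥ 1. The group homomorphism φ_{g,n} : H_{g,n} → B_{g+n} determined by β_i ↦ s_{g+i} (1 ≤ i ≤ n−1) and τ_j ↦ (s_g s_{g−1} ⋯ s_{j+1}) s_j² (s_{j+1}^{−1} ⋯ s_g^{−1}) (1 ≤ j ≤ g) is injective; i.e., the handlebody braid group H_{g,n} embeds as a subgroup of the Artin braid group B_{g+n}. -/
namespace HB
variable {A : Type*} [Group A]

/-- four-term relation -/
def R4 (b s : A) : Prop := b * s * b * s = s * b * s * b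
/-- `b s b⁻¹` commutes with `t` -/
def CC (b s t : A) : Prop := Commute (b * s * b⁻¹) t

theorem R4.conj {b s : A} (h : R4 b s) (c : A) : R4 (c * b * c⁻¹) (c * s * c⁻¹) := by
  unfold R4 at *
  calc _ = c * (b * s * b * s) * c⁻¹ := by group
    _ = c * (s * b * s * b) * c⁻¹ := by rw [h]
    _ = _ := by group

theorem R4.tw {b t : A} (h : R4 b t) : t * (b * t * b⁻¹) * t⁻¹ = b⁻¹ * t * b := by
  unfold R4 at h
  calc _ = b⁻¹ * (b * t * b * t) * b⁻¹ * t⁻¹ := by group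
    _ = b⁻¹ * (t * b * t * b) * b⁻¹ * t⁻¹ := by rw [h]
    _ = _ := by group

theorem CC.symm' {b s t : A} (h : CC b s t) : Commute s (b⁻¹ * t * b) := by
  unfold CC Commute SemiconjBy at *
  calc _ = b⁻¹ * ((b * s * b⁻¹) * t) * b := by group
    _ = b⁻¹ * (t * (b * s * b⁻¹)) * b := by rw [h]
    _ = _ := by group

theorem CC.of_symm' {b s t : A} (h : Commute s (b⁻¹ * t * b)) : CC b s t := by
  unfold CC Commute SemiconjBy at *
  calc _ = b * (s * (b⁻¹ * t * b)) * b⁻¹ := by group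
    _ = b * ((b⁻¹ * t * b) * s) * b⁻¹ := by rw [h]
    _ = _ := by group

theorem CC.mul_right {b s t t' : A} (h : CC b s t) (h' : CC b s t') : CC b s (t * t') :=
  Commute.mul_right h h'
theorem CC.inv_right {b s t : A} (h : CC b s t) : CC b s t⁻¹ := Commute.inv_right h
theorem CC.mul_left {b s s' t : A} (h : CC b s t) (h' : CC b s' t) : CC b (s * s') t := by
  have := Commute.mul_left h h'
  unfold CC
  rwa [show b * (s * s') * b⁻¹ = b * s * b⁻¹ * (b * s' * b⁻¹) by group]
theorem CC.inv_left {b s t : A} (h : CC b s t) : CC b s⁻¹ t := by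
  have := Commute.inv_left h
  unfold CC
  convert this using 1
  group

theorem commute_conj {s t : A} (h : Commute s t) (c : A) :
    Commute (c * s * c⁻¹) (c * t * c⁻¹) := by
  unfold Commute SemiconjBy at *
  calc _ = c * (s * t) * c⁻¹ := by group
    _ = c * (t * s) * c⁻¹ := by rw [h]
    _ = _ := by group

/-- Hurwitz move, commutation part. -/
theorem K1c {b s t : A} (ht : R4 b t) (h : CC b s t) : CC b t (t⁻¹ * s * t) := by
  have h1 := h.symm'
  rw [← ht.tw] at h1
  have := commute_conj h1.symm t⁻¹
  unfold CC
  convert this using 1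
  group

theorem K1r {b s t : A} (hs : R4 b s) (ht : R4 b t) (h : CC b s t) : R4 b (t⁻¹ * s * t) := by
  have h1 : R4 b (b * s * b⁻¹) := by
    have := hs.conj b
    rwa [show b * b * b⁻¹ = b by group] at this
  have h2 := h1.conj (t * b)⁻¹
  have h3 : t⁻¹ * (b * s * b⁻¹) * t = b * s * b⁻¹ := by
    have : Commute (b * s * b⁻¹) t := h
    rw [mul_assoc, this.eq]; group
  have e1 : (t * b)⁻¹ * b * (t * b)⁻¹⁻¹ = t * b * t⁻¹ := by
    have ht' := ht
    unfold R4 at ht'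
    calc _ = b⁻¹ * t⁻¹ * (b * t * b * t) * t⁻¹ := by group
      _ = b⁻¹ * t⁻¹ * (t * b * t * b) * t⁻¹ := by rw [ht']
      _ = _ := by group
  have e2 : (t * b)⁻¹ * (b * s * b⁻¹) * (t * b)⁻¹⁻¹ = s := by
    calc _ = b⁻¹ * (t⁻¹ * (b * s * b⁻¹) * t) * b := by group
      _ = _ := by rw [h3]; group
  rw [e1, e2] at h2
  have h4 := h2.conj t⁻¹
  convert h4 using 1 <;> group

theorem R4.mirror {b s : A} (h : R4 b s) : R4 b⁻¹ s⁻¹ := by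
  unfold R4 at *
  have := congrArg (·⁻¹) h
  simp only [mul_inv_rev] at this
  simpa [mul_assoc] using this.symm

theorem CC.mirror {b s t : A} (h : CC b s t) : CC b⁻¹ t⁻¹ s⁻¹ := by
  have := h.symm'.inv_left.inv_right.symm
  unfold CC
  convert this using 1
  group

theorem K2c {b s t : A} (hs : R4 b s) (h : CC b s t) : CC b (s * t * s⁻¹) s := by
  have := (K1c hs.mirror h.mirror).mirror
  convert this using 1 <;> group

theorem K2r {b s t : A} (hs : R4 b s) (ht : R4 b t) (h : CC b s t) : R4 b (s * t * s⁻¹) := by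
  have := (K1r ht.mirror hs.mirror h.mirror).mirror
  convert this using 1 <;> group

/-- relations of the handlebody braid group with `k = n - 1`. -/
structure HData (g k : ℕ) (β τ : ℕ → A) : Prop where
  braid : ∀ i, i + 1 < k → β i * β (i+1) * β i = β (i+1) * β i * β (i+1)
  comm : ∀ i j, i + 2 ≤ j → j < k → Commute (β i) (β j)
  r4 : ∀ i, 0 < k → i < g → R4 (β 0) (τ i)
  bt : ∀ i j, 1 ≤ i → i < k → j < g → Commute (β i) (τ j)
  cc : ∀ i j, 0 < k → i < j → j < g → CC (β 0) (τ i) (τ j)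

/-- The twist action of the `j`-th loop around the last one (index `g`). -/
def al (τ : ℕ → A) (g j i : ℕ) : A :=
  if i < j then τ i
  else if i = j ∨ i = g then (τ j * τ g)⁻¹ * τ i * (τ j * τ g)
  else ((τ j * τ g)⁻¹ * (τ g * τ j)) * τ i * ((τ j * τ g)⁻¹ * (τ g * τ j))⁻¹

/-- The inverse of the twist action. -/
def al' (τ : ℕ → A) (g j i : ℕ) : A :=
  if i < j then τ i
  else if i = j ∨ i = g then (τ j * τ g) * τ i * (τ j * τ g)⁻¹
  else ((τ j * τ g) * (τ g * τ j)⁻¹) * τ i * ((τ j * τ g) * (τ g * τ j)⁻¹)⁻¹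

section twist
variable {b x y y' z : A}

theorem L1 (hx : R4 b x) (hz : R4 b z) (h : CC b x z) : R4 b ((x * z)⁻¹ * x * (x * z)) := by
  have := K1r hx hz h
  convert this using 1; group

theorem L2 (hx : R4 b x) (hz : R4 b z) (h : CC b x z) : R4 b ((x * z)⁻¹ * z * (x * z)) := by
  have := K1r hz (K1r hx hz h) (K1c hz h)
  convert this using 1; group

theorem L5 (hx : R4 b x) (hz : R4 b z) (h : CC b x z) :
    CC b ((x * z)⁻¹ * x * (x * z)) ((x * z)⁻¹ * z * (x * z)) := by
  have := K1c (K1r hx hz h) (K1c hz h)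
  convert this using 1 <;> group

theorem L3 (hx : R4 b x) (hy : R4 b y) (hz : R4 b z) (hxy : CC b x y) (hyz : CC b y z)
    (hxz : CC b x z) :
    R4 b (((x * z)⁻¹ * (z * x)) * y * ((x * z)⁻¹ * (z * x))⁻¹) ∧
    CC b ((x * z)⁻¹ * x * (x * z)) (((x * z)⁻¹ * (z * x)) * y * ((x * z)⁻¹ * (z * x))⁻¹) ∧
    CC b (((x * z)⁻¹ * (z * x)) * y * ((x * z)⁻¹ * (z * x))⁻¹) ((x * z)⁻¹ * z * (x * z)) := by
  have r1 := K2r hx hy hxy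
  have c1 := K2c hx hxy
  have c2 : CC b (x * y * x⁻¹) z := (hxz.mul_left hyz).mul_left hxz.inv_left
  have rx := L1 hx hz hxz
  have rz := L2 hx hz hxz
  have cxz := L5 hx hz hxz
  have cu := c1.mul_right c2
  have c3 : CC b (x * y * x⁻¹) ((x * z)⁻¹ * x * (x * z)) :=
    (cu.inv_right.mul_right c1).mul_right cu
  have c4 : CC b (x * y * x⁻¹) ((x * z)⁻¹ * z * (x * z)) :=
    (cu.inv_right.mul_right c2).mul_right cu
  have e : ((x * z)⁻¹ * (z * x)) * y * ((x * z)⁻¹ * (z * x))⁻¹ =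
    ((x * z)⁻¹ * x * (x * z))⁻¹ * (x * y * x⁻¹) * ((x * z)⁻¹ * x * (x * z)) := by group
  rw [e]
  exact ⟨K1r r1 rx c3, K1c rx c3, (cxz.inv_left.mul_left c4).mul_left cxz⟩

theorem L6 (hx : R4 b x) (hy' : R4 b y') (hz : R4 b z) (hy'z : CC b y' z)
    (hxy : CC b x y) (hxy' : CC b x y') (hyy' : CC b y y') (hyz : CC b y z)
    (hxz : CC b x z) :
    CC b (((x * z)⁻¹ * (z * x)) * y * ((x * z)⁻¹ * (z * x))⁻¹)
      (((x * z)⁻¹ * (z * x)) * y' * ((x * z)⁻¹ * (z * x))⁻¹) := by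
  have c1 := K2c hx hxy
  have c2 : CC b (x * y * x⁻¹) z := (hxz.mul_left hyz).mul_left hxz.inv_left
  have c0 : CC b (x * y * x⁻¹) y' := (hxy'.mul_left hyy').mul_left hxy'.inv_left
  have rx := L1 hx hz hxz
  have cu := c1.mul_right c2
  have c3 : CC b (x * y * x⁻¹) ((x * z)⁻¹ * x * (x * z)) :=
    (cu.inv_right.mul_right c1).mul_right cu
  have d0 : CC b (x * y * x⁻¹) (((x * z)⁻¹ * (z * x)) * y' * ((x * z)⁻¹ * (z * x))⁻¹) := by
    have cp := cu.inv_right.mul_right (c2.mul_right c1)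
    exact (cp.mul_right c0).mul_right cp.inv_right
  have d1 := (L3 hx hy' hz hxy' hy'z hxz).2.1
  have e : ((x * z)⁻¹ * (z * x)) * y * ((x * z)⁻¹ * (z * x))⁻¹ =
    ((x * z)⁻¹ * x * (x * z))⁻¹ * (x * y * x⁻¹) * ((x * z)⁻¹ * x * (x * z)) := by group
  rw [e]
  exact (d1.inv_left.mul_left d0).mul_left d1

theorem L1' (hx : R4 b x) (hz : R4 b z) (h : CC b x z) : R4 b ((x * z) * x * (x * z)⁻¹) := by
  have := (L2 hz.mirror hx.mirror h.mirror).mirror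
  convert this using 1 <;> group

theorem L2' (hx : R4 b x) (hz : R4 b z) (h : CC b x z) : R4 b ((x * z) * z * (x * z)⁻¹) := by
  have := (L1 hz.mirror hx.mirror h.mirror).mirror
  convert this using 1 <;> group

theorem L5' (hx : R4 b x) (hz : R4 b z) (h : CC b x z) :
    CC b ((x * z) * x * (x * z)⁻¹) ((x * z) * z * (x * z)⁻¹) := by
  have := (L5 hz.mirror hx.mirror h.mirror).mirror
  convert this using 1 <;> group

theorem L3' (hx : R4 b x) (hy : R4 b y) (hz : R4 b z) (hxy : CC b x y) (hyz : CC b y z)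
    (hxz : CC b x z) :
    R4 b (((x * z) * (z * x)⁻¹) * y * ((x * z) * (z * x)⁻¹)⁻¹) ∧
    CC b ((x * z) * x * (x * z)⁻¹) (((x * z) * (z * x)⁻¹) * y * ((x * z) * (z * x)⁻¹)⁻¹) ∧
    CC b (((x * z) * (z * x)⁻¹) * y * ((x * z) * (z * x)⁻¹)⁻¹) ((x * z) * z * (x * z)⁻¹) := by
  have := (L3 hz.mirror hy.mirror hx.mirror hyz.mirror hxy.mirror hxz.mirror)
  refine ⟨?_, ?_, ?_⟩
  · convert this.1.mirror using 1 <;> group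
  · convert this.2.2.mirror using 1 <;> group
  · convert this.2.1.mirror using 1 <;> group

theorem L6' (hx : R4 b x) (hy : R4 b y) (hz : R4 b z) (hy'z : CC b y' z)
    (hxy : CC b x y) (hxy' : CC b x y') (hyy' : CC b y y') (hyz : CC b y z)
    (hxz : CC b x z) :
    CC b (((x * z) * (z * x)⁻¹) * y * ((x * z) * (z * x)⁻¹)⁻¹)
      (((x * z) * (z * x)⁻¹) * y' * ((x * z) * (z * x)⁻¹)⁻¹) := by
  have := (L6 hz.mirror hy.mirror hx.mirror hxy.mirror hy'z.mirror hyz.mirror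
    hyy'.mirror hxy'.mirror hxz.mirror).mirror
  convert this using 1 <;> group

end twist

theorem HData.al {g k j : ℕ} {β τ : ℕ → A} (H : HData (g+1) k β τ) (hj : j < g) :
    HData (g+1) k β (al τ g j) := by
  refine ⟨H.braid, H.comm, ?_, ?_, ?_⟩
  · intro i hk hi
    have r := fun i => H.r4 i hk
    have c := fun i i' => H.cc i i' hk
    unfold HB.al
    split_ifs with h1 h2
    · exact r _ hi
    · rcases h2 with rfl | rfl
      · exact L1 (r _ hi) (r _ (by omega)) (c _ _ hj (by omega))
      · exact L2 (r _ (by omega)) (r _ (by omega)) (c _ _ hj (by omega))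
    · exact (L3 (r _ (by omega)) (r _ hi) (r _ (by omega)) (c _ _ (by omega) (by omega))
        (c _ _ (by omega) (by omega)) (c _ _ (by omega) (by omega))).1
  · intro i i' hi hk hi'
    have c := fun i' => H.bt i i' hi hk
    have cu := (c j (by omega)).mul_right (c g (by omega))
    have cv := (c g (by omega)).mul_right (c j (by omega))
    have cp := cu.inv_right.mul_right cv
    unfold HB.al
    split_ifs with h1 h2
    · exact c _ hi'
    · exact (cu.inv_right.mul_right (c _ hi')).mul_right cu
    · exact (cp.mul_right (c _ hi')).mul_right cp.inv_right
  · intro i i' hk hii' hi'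
    have r := fun i => H.r4 i hk
    have c := fun i i' => H.cc i i' hk
    by_cases hij : i < j
    · have c := fun i' => c i i'
      have cu := (c j hij (by omega)).mul_right (c g (by omega) (by omega))
      have cv := (c g (by omega) (by omega)).mul_right (c j hij (by omega))
      have cp := cu.inv_right.mul_right cv
      have ci := c i' hii' hi'
      unfold HB.al
      rw [if_pos hij]
      split_ifs with h1 h2
      · exact ci
      · exact (cu.inv_right.mul_right ci).mul_right cu
      · exact (cp.mul_right ci).mul_right cp.inv_right
    · have cjg := c j g hj (by omega)
      have rj := r j (by omega)
      have rg := r g (by omega)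
      unfold HB.al
      rw [if_neg hij, if_neg (by omega : ¬ i' < j)]
      by_cases h1 : i = j
      · subst h1
        rw [if_pos (Or.inl rfl)]
        by_cases h2 : i' = g
        · subst h2
          rw [if_pos (Or.inr rfl)]
          exact L5 rj rg cjg
        · rw [if_neg (by omega)]
          exact (L3 rj (r _ hi') rg (c _ _ hii' hi') (c _ _ (by omega) (by omega)) cjg).2.1
      · rw [if_neg (by omega)]
        by_cases h2 : i' = g
        · subst h2
          rw [if_pos (Or.inr rfl)]
          exact (L3 rj (r _ (by omega)) rg (c _ _ (by omega) (by omega)) (c _ _ hii' hi') cjg).2.2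
        · rw [if_neg (by omega)]
          exact L6 rj (r _ hi') rg (c _ _ (by omega) (by omega)) (c _ _ (by omega) (by omega))
            (c _ _ (by omega) (by omega)) (c _ _ hii' hi') (c _ _ (by omega) (by omega)) cjg

theorem HData.al' {g k j : ℕ} {β τ : ℕ → A} (H : HData (g+1) k β τ) (hj : j < g) :
    HData (g+1) k β (al' τ g j) := by
  refine ⟨H.braid, H.comm, ?_, ?_, ?_⟩
  · intro i hk hi
    have r := fun i => H.r4 i hk
    have c := fun i i' => H.cc i i' hk
    unfold HB.al'
    split_ifs with h1 h2
    · exact r _ hi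
    · rcases h2 with rfl | rfl
      · exact L1' (r _ hi) (r _ (by omega)) (c _ _ hj (by omega))
      · exact L2' (r _ (by omega)) (r _ (by omega)) (c _ _ hj (by omega))
    · exact (L3' (r _ (by omega)) (r _ hi) (r _ (by omega)) (c _ _ (by omega) (by omega))
        (c _ _ (by omega) (by omega)) (c _ _ (by omega) (by omega))).1
  · intro i i' hi hk hi'
    have c := fun i' => H.bt i i' hi hk
    have cu := (c j (by omega)).mul_right (c g (by omega))
    have cv := (c g (by omega)).mul_right (c j (by omega))
    have cp := cu.mul_right cv.inv_right
    unfold HB.al'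
    split_ifs with h1 h2
    · exact c _ hi'
    · exact (cu.mul_right (c _ hi')).mul_right cu.inv_right
    · exact (cp.mul_right (c _ hi')).mul_right cp.inv_right
  · intro i i' hk hii' hi'
    have r := fun i => H.r4 i hk
    have c := fun i i' => H.cc i i' hk
    by_cases hij : i < j
    · have c := fun i' => c i i'
      have cu := (c j hij (by omega)).mul_right (c g (by omega) (by omega))
      have cv := (c g (by omega) (by omega)).mul_right (c j hij (by omega))
      have cp := cu.mul_right cv.inv_right
      have ci := c i' hii' hi'
      unfold HB.al'
      rw [if_pos hij]
      split_ifs with h1 h2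
      · exact ci
      · exact (cu.mul_right ci).mul_right cu.inv_right
      · exact (cp.mul_right ci).mul_right cp.inv_right
    · have cjg := c j g hj (by omega)
      have rj := r j (by omega)
      have rg := r g (by omega)
      unfold HB.al'
      rw [if_neg hij, if_neg (by omega : ¬ i' < j)]
      by_cases h1 : i = j
      · subst h1
        rw [if_pos (Or.inl rfl)]
        by_cases h2 : i' = g
        · subst h2
          rw [if_pos (Or.inr rfl)]
          exact L5' rj rg cjg
        · rw [if_neg (by omega)]
          exact (L3' rj (r _ hi') rg (c _ _ hii' hi') (c _ _ (by omega) (by omega)) cjg).2.1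
      · rw [if_neg (by omega)]
        by_cases h2 : i' = g
        · subst h2
          rw [if_pos (Or.inr rfl)]
          exact (L3' rj (r _ (by omega)) rg (c _ _ (by omega) (by omega)) (c _ _ hii' hi') cjg).2.2
        · rw [if_neg (by omega)]
          exact L6' rj (r _ (by omega)) rg (c _ _ (by omega) (by omega)) (c _ _ (by omega) (by omega))
            (c _ _ (by omega) (by omega)) (c _ _ hii' hi') (c _ _ (by omega) (by omega)) cjg

end HB
namespace HB
section action
variable {A : Type*} [Group A]

/-- conjugates `β_i ⋯ β_1 z β_1⁻¹ ⋯ β_i⁻¹` -/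
def om (β : ℕ → A) (z : A) : ℕ → A
  | 0 => z
  | i+1 => β i * om β z i * (β i)⁻¹

theorem om_comm_hi {g k : ℕ} {β τ : ℕ → A} (H : HData (g+1) k β τ) (i j : ℕ) (h : i < j)
    (hj : j < k) : Commute (β j) (om β (τ g) i) := by
  induction i with
  | zero => exact H.bt j g h hj (by omega)
  | succ i ih =>
    have h1 := (H.comm i j (by omega) hj).symm
    exact (h1.mul_right (ih (by omega))).mul_right h1.inv_right

theorem braid_conj {b c t : A} (h : b * c * b = c * b * c) (ht : Commute c t) :
    Commute b (c * (b * t * b⁻¹) * c⁻¹) := by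
  have e1 : c * b⁻¹ * c⁻¹ = b⁻¹ * c⁻¹ * b := by
    calc _ = b⁻¹ * c⁻¹ * (c * b * c) * b⁻¹ * c⁻¹ := by group
      _ = b⁻¹ * c⁻¹ * (b * c * b) * b⁻¹ * c⁻¹ := by rw [h]
      _ = _ := by group
  unfold Commute SemiconjBy at *
  calc _ = (b * c * b) * t * b⁻¹ * c⁻¹ := by group
    _ = c * b * (c * t) * b⁻¹ * c⁻¹ := by rw [h]; group
    _ = c * b * t * (c * b⁻¹ * c⁻¹) := by rw [ht]; group
    _ = _ := by rw [e1]; group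

theorem R4_braid {b c t : A} (h : b * c * b = c * b * c) (ht : Commute c t) (hr : R4 b t) :
    R4 c (b * t * b⁻¹) := by
  have h1 := (hr.conj c).conj b
  have e : b * (c * b * c⁻¹) * b⁻¹ = c := by
    calc _ = (b * c * b) * c⁻¹ * b⁻¹ := by group
      _ = _ := by rw [h]; group
  have e2 : c * t * c⁻¹ = t := by rw [ht.eq]; group
  rwa [e, e2] at h1

theorem om_comm_lo {g k : ℕ} {β τ : ℕ → A} (H : HData (g+1) k β τ) (i j : ℕ) (h : j + 1 < i)
    (hj : i ≤ k) : Commute (β j) (om β (τ g) i) := by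
  induction i with
  | zero => omega
  | succ i ih =>
    by_cases hi : i = j + 1
    · subst hi
      exact braid_conj (H.braid j (by omega)) (om_comm_hi H j (j+1) (by omega) (by omega))
    · have h1 := (H.comm j i (by omega) (by omega))
      exact (h1.mul_right (ih (by omega) (by omega))).mul_right h1.inv_right

theorem om_r4 {g k : ℕ} {β τ : ℕ → A} (H : HData (g+1) k β τ) (i : ℕ)
    (hi : i < k) : R4 (β i) (om β (τ g) i) := by
  induction i with
  | zero => exact H.r4 g hi (by omega)
  | succ i ih =>
    exact R4_braid (H.braid i (by omega)) (om_comm_hi H i (i+1) (by omega) hi) (ih (by omega))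

theorem om_tau {g k : ℕ} {β τ : ℕ → A} (H : HData (g+1) k β τ) (i j : ℕ) (h : 1 ≤ i)
    (hi : i ≤ k) (hj : j < g) : Commute (om β (τ g) i) ((τ g)⁻¹ * τ j * τ g) := by
  induction i with
  | zero => omega
  | succ i ih =>
    by_cases h0 : i = 0
    · subst h0
      exact K1c (H.r4 g (by omega) (by omega)) (H.cc j g (by omega) hj (by omega))
    · have hg := H.bt i g (by omega) (by omega) (by omega)
      have h1 := (hg.inv_right.mul_right (H.bt i j (by omega) (by omega) (by omega))).mul_right hg
      exact (h1.mul_left (ih (by omega) (by omega))).mul_left h1.inv_left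

/-- action of the braid generators -/
def Bf (k : ℕ) (β : ℕ → A) (z : A) (i : ℕ) : Equiv.Perm (ℕ × A) where
  toFun p := if p.1 < i then (p.1, β (i-1) * p.2) else if p.1 = i then (i+1, p.2)
    else if p.1 = i+1 then (i, om β z i * p.2) else if p.1 ≤ k+1 then (p.1, β i * p.2) else p
  invFun p := if p.1 < i then (p.1, (β (i-1))⁻¹ * p.2) else if p.1 = i+1 then (i, p.2)
    else if p.1 = i then (i+1, (om β z i)⁻¹ * p.2) else if p.1 ≤ k+1 then (p.1, (β i)⁻¹ * p.2)
    else p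
  left_inv := by
    rintro ⟨c, a⟩
    by_cases h1 : c < i
    · simp [h1]
    by_cases h2 : c = i
    · subst h2; simp
    by_cases h3 : c = i + 1
    · subst h3; simp
    by_cases h4 : c ≤ k + 1
    · simp [h1, h2, h3, h4]
    · simp [h1, h2, h3, h4]
  right_inv := by
    rintro ⟨c, a⟩
    by_cases h1 : c < i
    · simp [h1]
    by_cases h2 : c = i
    · subst h2; simp
    by_cases h3 : c = i + 1
    · subst h3; simp
    by_cases h4 : c ≤ k + 1
    · simp [h1, h2, h3, h4]
    · simp [h1, h2, h3, h4]

/-- action of the twist generators -/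
def Tf (k : ℕ) (τ : ℕ → A) (g : ℕ) (α : ℕ → MulAut A) (j : ℕ) : Equiv.Perm (ℕ × A) where
  toFun p := if p.1 = 0 then (p.1, α j p.2)
    else if p.1 ≤ k+1 then (p.1, (τ g)⁻¹ * τ j * τ g * p.2) else p
  invFun p := if p.1 = 0 then (p.1, (α j).symm p.2)
    else if p.1 ≤ k+1 then (p.1, ((τ g)⁻¹ * τ j * τ g)⁻¹ * p.2) else p
  left_inv := by
    rintro ⟨c, a⟩
    by_cases h1 : c = 0
    · simp [h1]
    by_cases h4 : c ≤ k + 1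
    · simp [h1, h4, mul_assoc]
    · simp [h1, h4]
  right_inv := by
    rintro ⟨c, a⟩
    by_cases h1 : c = 0
    · simp [h1]
    by_cases h4 : c ≤ k + 1
    · simp [h1, h4, mul_assoc]
    · simp [h1, h4]

variable {k g : ℕ} {β τ : ℕ → A} {z : A} {i j c : ℕ} {a : A} {α : ℕ → MulAut A}

theorem B_lt (h : c < i) : Bf k β z i (c, a) = (c, β (i-1) * a) := by simp [Bf, h]
theorem B_eq (h : c = i) : Bf k β z i (c, a) = (i+1, a) := by simp [Bf, h]
theorem B_succ (h : c = i+1) : Bf k β z i (c, a) = (i, om β z i * a) := by simp [Bf, h]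
theorem B_gt (h : i+1 < c ∧ c ≤ k+1) : Bf k β z i (c, a) = (c, β i * a) := by
  simp [Bf, h.2, show ¬ c < i by omega, show c ≠ i by omega, show c ≠ i + 1 by omega]
theorem B_out (h : i+1 < c ∧ k+1 < c) : Bf k β z i (c, a) = (c, a) := by
  simp [Bf, show ¬ c ≤ k+1 by omega, show ¬ c < i by omega, show c ≠ i by omega,
    show c ≠ i + 1 by omega]
theorem B0i_zero : (Bf k β z 0)⁻¹ (0, a) = (1, z⁻¹ * a) := by
  rw [Equiv.Perm.inv_eq_iff_eq, B_succ (by omega)]; simp [om]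
theorem B0i_one : (Bf k β z 0)⁻¹ (1, a) = (0, a) := by
  rw [Equiv.Perm.inv_eq_iff_eq, B_eq (by omega)]
theorem B0i_gt (h : 1 < c ∧ c ≤ k+1) : (Bf k β z 0)⁻¹ (c, a) = (c, (β 0)⁻¹ * a) := by
  rw [Equiv.Perm.inv_eq_iff_eq, B_gt (by omega)]; simp
theorem B0i_out (h : 1 < c ∧ k + 1 < c) : (Bf k β z 0)⁻¹ (c, a) = (c, a) := by
  rw [Equiv.Perm.inv_eq_iff_eq, B_out (by omega)]
theorem T_zero : Tf k τ g α j (0, a) = (0, α j a) := by simp [Tf]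
theorem T_pos (h : 1 ≤ c ∧ c ≤ k+1) : Tf k τ g α j (c, a) = (c, (τ g)⁻¹ * τ j * τ g * a) := by
  simp [Tf, h.2, show c ≠ 0 by omega]
theorem T_out (h : k+1 < c) : Tf k τ g α j (c, a) = (c, a) := by
  simp [Tf, show ¬ c ≤ k+1 by omega, show c ≠ 0 by omega]

theorem act (H : HData (g+1) k β τ)
    (hb : ∀ j i, j < g → i < k → α j (β i) = β i)
    (ht : ∀ j i, j < g → i ≤ g → α j (τ i) = al τ g j i) :
    HData g (k+1) (Bf k β (τ g)) (Tf k τ g α) := by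
  refine ⟨?_, ?_, ?_, ?_, ?_⟩
  · intro i hi
    ext1 ⟨c, a⟩
    simp only [Equiv.Perm.mul_apply]
    rcases lt_trichotomy c i with h | h | h
    · have h1 := H.braid (i-1) (by omega)
      rw [show i - 1 + 1 = i by omega] at h1
      simp (disch := omega) only [B_lt, Nat.add_sub_cancel, Prod.mk.injEq, true_and]
      simp only [← mul_assoc, h1]
    · simp (disch := omega) only [B_lt, B_eq, B_gt, Nat.add_sub_cancel]
    · rcases Nat.lt_or_ge c (i+2) with h | h
      · obtain rfl : c = i + 1 := by omega
        simp (disch := omega) only [B_lt, B_eq, B_succ, B_gt, Nat.add_sub_cancel, om]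
        simp [mul_assoc]
      by_cases h2 : c = i + 2
      · subst h2
        have h4 := om_r4 H i (by omega)
        unfold R4 at h4
        simp (disch := omega) only [B_lt, B_eq, B_succ, B_gt, Nat.add_sub_cancel, om,
          Prod.mk.injEq, true_and]
        simp only [← mul_assoc, h4]
        simp [mul_assoc]
      by_cases h3 : c ≤ k + 1
      · have h1 := H.braid i (by omega)
        simp (disch := omega) only [B_gt, Prod.mk.injEq, true_and]
        simp only [← mul_assoc, h1]
      · simp (disch := omega) only [B_out]
  · intro i j hij hj
    ext1 ⟨c, a⟩
    simp only [Equiv.Perm.mul_apply]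
    rcases lt_trichotomy c i with h | h | h
    · have h1 := (H.comm (i-1) (j-1) (by omega) (by omega)).eq
      simp (disch := omega) only [B_lt, ← mul_assoc, h1]
    · simp (disch := omega) only [B_lt, B_eq]
    by_cases h1 : c = i + 1
    · have h2 := (om_comm_hi H i (j-1) (by omega) (by omega)).eq
      simp (disch := omega) only [B_lt, B_succ, ← mul_assoc, h2]
    rcases lt_trichotomy c j with h | h | h
    · have h1 := (H.comm (i) (j-1) (by omega) (by omega)).eq
      simp (disch := omega) only [B_lt, B_gt, ← mul_assoc, h1]
    · simp (disch := omega) only [B_gt, B_eq]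
    by_cases h1 : c = j + 1
    · have h2 := (om_comm_lo H j i (by omega) (by omega)).eq
      simp (disch := omega) only [B_gt, B_succ, ← mul_assoc, h2]
    by_cases h3 : c ≤ k + 1
    · have h1 := (H.comm i j (by omega) (by omega)).eq
      simp (disch := omega) only [B_gt, ← mul_assoc, h1]
    · simp (disch := omega) only [B_out]
  · intro j _ hj
    have hz : α j (τ g) = (τ j * τ g)⁻¹ * τ g * (τ j * τ g) := by
      rw [ht j g hj le_rfl]; simp [al, show ¬ g < j by omega]
    have hx : α j (τ j) = (τ j * τ g)⁻¹ * τ j * (τ j * τ g) := by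
      rw [ht j j hj hj.le]; simp [al]
    unfold R4
    ext1 ⟨c, a⟩
    simp only [Equiv.Perm.mul_apply]
    by_cases h0 : c = 0
    · subst h0
      simp (disch := omega) only [B_eq, T_pos, T_zero, B_succ, zero_add, om, map_mul, hx, hz,
        map_inv, Prod.mk.injEq, true_and]
      group
    by_cases h1 : c = 1
    · subst h1
      simp (disch := omega) only [B_eq, T_pos, T_zero, B_succ, zero_add, om, map_mul, hx, hz,
        map_inv, Prod.mk.injEq, true_and]
      group
    by_cases h3 : c ≤ k + 1
    · have h1 := K1r (H.r4 j (by omega) (by omega)) (H.r4 g (by omega) (by omega))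
        (H.cc j g (by omega) hj (by omega))
      unfold R4 at h1
      simp (disch := omega) only [B_gt, T_pos, Prod.mk.injEq, true_and]
      rw [← mul_assoc (β 0), ← mul_assoc (_ * _), ← mul_assoc (_ * _), h1]
      simp only [mul_assoc]
    · simp (disch := omega) only [B_out, T_out]
  · intro i j hi hk hj
    have hc : ∀ i, 1 ≤ i → i < k → Commute (β i) ((τ g)⁻¹ * τ j * τ g) := by
      intro i hi hk
      have hg := H.bt i g hi hk (by omega)
      exact ((hg.inv_right.mul_right (H.bt i j (by omega) (by omega) (by omega))).mul_right hg)
    ext1 ⟨c, a⟩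
    simp only [Equiv.Perm.mul_apply]
    by_cases h0 : c = 0
    · subst h0
      simp (disch := omega) only [B_lt, T_zero, map_mul, hb]
    rcases lt_trichotomy c i with h | h | h
    · have h1 := (hc (i-1) (by omega) (by omega)).eq
      simp (disch := omega) only [B_lt, T_pos, Prod.mk.injEq, true_and]
      rw [← mul_assoc, h1, mul_assoc]
    · simp (disch := omega) only [B_eq, T_pos]
    by_cases h1 : c = i + 1
    · have h1 := (om_tau H i j (by omega) (by omega) hj).eq
      simp (disch := omega) only [B_succ, T_pos, Prod.mk.injEq, true_and]
      rw [← mul_assoc, h1, mul_assoc]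
    by_cases h3 : c ≤ k + 1
    · have h1 := (hc i (by omega) (by omega)).eq
      simp (disch := omega) only [B_gt, T_pos, Prod.mk.injEq, true_and]
      rw [← mul_assoc, h1, mul_assoc]
    · simp (disch := omega) only [B_out, T_out]
  · intro i j _ hij hj
    have h1 : α j (τ i) = τ i := by
      rw [ht j i hj (by omega)]; simp [al, hij]
    have hz : α i (τ g) = (τ i * τ g)⁻¹ * τ g * (τ i * τ g) := by
      rw [ht i g (by omega) le_rfl]; simp [al, show ¬ g < i by omega]
    have h2 : α i (τ j) = ((τ i * τ g)⁻¹ * (τ g * τ i)) * τ j *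
        ((τ i * τ g)⁻¹ * (τ g * τ i))⁻¹ := by
      rw [ht i j (by omega) hj.le, al, if_neg (by omega), if_neg (by omega)]
    unfold CC
    ext1 ⟨c, a⟩
    simp only [Equiv.Perm.mul_apply]
    by_cases h0 : c = 0
    · subst h0
      simp (disch := omega) only [B_eq, T_pos, T_zero, B_succ, zero_add, om, map_mul, h1,
        B0i_zero, map_inv, Prod.mk.injEq, true_and]
      simp [mul_assoc, h1]
    by_cases h1 : c = 1
    · subst h1
      simp (disch := omega) only [B_eq, T_pos, T_zero, B_succ, zero_add, om, map_mul, h2, hz,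
        B0i_one, map_inv, Prod.mk.injEq, true_and]
      group
    by_cases h3 : c ≤ k + 1
    · have k1 := K1c (H.r4 g (by omega) (by omega)) (H.cc j g (by omega) hj (by omega))
      have k2 := H.cc i j (by omega) hij (by omega)
      have k3 := H.cc i g (by omega) (by omega) (by omega)
      have k4 : CC (β 0) (τ i) ((τ g)⁻¹ * τ j * τ g) :=
        (k3.inv_right.mul_right k2).mul_right k3
      have k5 := ((k1.inv_left.mul_left k4).mul_left k1)
      unfold CC Commute SemiconjBy at k5
      simp (disch := omega) only [B_gt, B0i_gt, T_pos, Prod.mk.injEq, true_and]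
      have := congrArg (· * a) k5
      simpa [mul_assoc] using this
    · simp (disch := omega) only [B_out, T_out, B0i_out]

end action
end HB
namespace HB

/-- braid generators indexed by naturals -/
def nb (g n i : ℕ) : HandlebodyBraidGroup g n := if h : i < n - 1 then hβ ⟨i, h⟩ else 1
/-- twist generators indexed by naturals -/
def nt (g n j : ℕ) : HandlebodyBraidGroup g n := if h : j < g then hτ ⟨j, h⟩ else 1

theorem hom_ext {g n : ℕ} {P : Type*} [Group P] {f f' : HandlebodyBraidGroup g n →* P}
    (h1 : ∀ i, i < n - 1 → f (nb g n i) = f' (nb g n i))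
    (h2 : ∀ j, j < g → f (nt g n j) = f' (nt g n j)) : f = f' := by
  apply PresentedGroup.ext
  rintro (⟨i, hi⟩ | ⟨j, hj⟩)
  · have := h1 i hi
    simpa [nb, hi, hβ] using this
  · have := h2 j hj
    simpa [nt, hj, hτ] using this

theorem exists_hom {g n : ℕ} {P : Type*} [Group P] {β τ : ℕ → P} (H : HData g (n-1) β τ) :
    ∃ f : HandlebodyBraidGroup g n →* P,
      (∀ i, i < n - 1 → f (nb g n i) = β i) ∧ (∀ j, j < g → f (nt g n j) = τ j) := by
  let F : Fin (n-1) ⊕ Fin g → P := Sum.elim (fun i => β i) (fun j => τ j)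
  have hF : ∀ r ∈ handlebodyRels g n, FreeGroup.lift F r = 1 := by
    intro r hr
    rcases hr with ⟨i, j, ⟨hij, rfl⟩ | ⟨hij, rfl⟩⟩ | ⟨b, i, hb, rfl⟩ | ⟨b, j, hb, rfl⟩ |
      ⟨b, i, j, hb, hij, rfl⟩
    · simp only [map_mul, map_inv, FreeGroup.lift_apply_of, F, Sum.elim_inl, Sum.elim_inr]
      rw [mul_inv_eq_one, ← hij]
      exact H.braid _ (by omega)
    · simp only [map_mul, map_inv, FreeGroup.lift_apply_of, F, Sum.elim_inl, Sum.elim_inr]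
      rw [mul_inv_eq_one]
      exact H.comm _ _ hij (by omega)
    · simp only [map_mul, map_inv, FreeGroup.lift_apply_of, F, Sum.elim_inl, Sum.elim_inr]
      rw [mul_inv_eq_one, hb]
      exact H.r4 _ (by omega) i.2
    · simp only [map_mul, map_inv, FreeGroup.lift_apply_of, F, Sum.elim_inl, Sum.elim_inr]
      rw [mul_inv_eq_one]
      exact H.bt _ _ hb b.2 j.2
    · simp only [map_mul, map_inv, FreeGroup.lift_apply_of, F, Sum.elim_inl, Sum.elim_inr]
      rw [mul_inv_eq_one, hb]
      exact H.cc _ _ (by omega) hij j.2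
  refine ⟨PresentedGroup.toGroup hF, ?_, ?_⟩
  · intro i hi
    simp [nb, hi, hβ, F]
  · intro i hi
    simp [nt, hi, hτ, F]

theorem rel_eq {X : Type*} {rels : Set (FreeGroup X)} {u v : FreeGroup X}
    (h : u * v⁻¹ ∈ rels) : PresentedGroup.mk rels u = PresentedGroup.mk rels v := by
  have := PresentedGroup.one_of_mem h
  rwa [map_mul, map_inv, mul_inv_eq_one] at this

theorem hdata (g n : ℕ) : HData g (n-1) (nb g n) (nt g n) := by
  refine ⟨?_, ?_, ?_, ?_, ?_⟩
  · intro i hi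
    have h : i < n - 1 := by omega
    simp only [nb, hi, h, dif_pos]
    exact rel_eq (Or.inl ⟨⟨i, h⟩, ⟨i+1, hi⟩, Or.inl ⟨rfl, rfl⟩⟩)
  · intro i j hij hj
    have h : i < n - 1 := by omega
    simp only [nb, hj, h, dif_pos]
    exact rel_eq (Or.inl ⟨⟨i, h⟩, ⟨j, hj⟩, Or.inr ⟨hij, rfl⟩⟩)
  · intro i hk hi
    simp only [nb, nt, hk, hi, dif_pos]
    exact rel_eq (Or.inr (Or.inl ⟨⟨0, hk⟩, ⟨i, hi⟩, rfl, rfl⟩))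
  · intro i j h1 hi hj
    simp only [nb, nt, hi, hj, dif_pos]
    exact rel_eq (Or.inr (Or.inr (Or.inl ⟨⟨i, hi⟩, ⟨j, hj⟩, h1, rfl⟩)))
  · intro i j hk hij hj
    have h : i < g := by omega
    simp only [nb, nt, hk, h, hj, dif_pos]
    exact rel_eq (Or.inr (Or.inr (Or.inr ⟨⟨0, hk⟩, ⟨i, h⟩, ⟨j, hj⟩, rfl, hij, rfl⟩)))

/-- the automorphism `α_j` -/
theorem exists_aut (g n j : ℕ) (hj : j < g) : ∃ α : MulAut (HandlebodyBraidGroup (g+1) n),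
    (∀ i, i < n - 1 → α (nb _ n i) = nb _ n i) ∧
    (∀ i, i ≤ g → α (nt _ n i) = al (nt _ n) g j i) := by
  obtain ⟨f, f1, f2⟩ := exists_hom ((hdata (g+1) n).al hj)
  obtain ⟨f', f1', f2'⟩ := exists_hom ((hdata (g+1) n).al' hj)
  have fj := f2 j (by omega)
  have fg := f2 g (by omega)
  have fj' := f2' j (by omega)
  have fg' := f2' g (by omega)
  have hgj : ¬ g < j := by omega
  simp only [al, al', lt_irrefl, true_or, or_true, if_true, if_false, hgj] at fj fg fj' fg'
  have e1 : f.comp f' = MonoidHom.id _ := by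
    apply hom_ext
    · intro i hi
      simp [f1' i hi, f1 i hi]
    · intro i hi
      simp only [MonoidHom.comp_apply, MonoidHom.id_apply, f2' i hi, al']
      have fi := f2 i hi
      unfold al at fi
      split_ifs at fi ⊢
      · exact fi
      · simp only [map_mul, map_inv, fj, fg, fi]
        group
      · simp only [map_mul, map_inv, fj, fg, fi]
        group
  have e2 : f'.comp f = MonoidHom.id _ := by
    apply hom_ext
    · intro i hi
      simp [f1' i hi, f1 i hi]
    · intro i hi
      simp only [MonoidHom.comp_apply, MonoidHom.id_apply, f2 i hi, al]
      have fi := f2' i hi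
      unfold al' at fi
      split_ifs at fi ⊢
      · exact fi
      · simp only [map_mul, map_inv, fj', fg', fi]
        group
      · simp only [map_mul, map_inv, fj', fg', fi]
        group
  exact ⟨MonoidHom.toMulEquiv f f' e2 e1, f1, fun i hi => f2 i (by omega)⟩

/-- relations for the images of generators under `H_{g+1,n} → H_{g,n+1}` -/
theorem HData.down {P : Type*} [Group P] {g k : ℕ} {β τ : ℕ → P} (H : HData g (k+1) β τ) :
    HData (g+1) k (fun i => β (i+1))
      (fun j => if j = g then β 0 ^ 2 else β 0 * τ j * (β 0)⁻¹) := by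
  refine ⟨fun i hi => H.braid _ (by omega), fun i j h hj => H.comm _ _ (by omega) (by omega),
    ?_, ?_, ?_⟩
  · intro i hk hi
    have hb := H.braid 0 (by omega)
    split_ifs with h
    · unfold R4
      simp only [zero_add] at *
      generalize β 0 = b at *
      generalize β 1 = c at *
      have h5 : b * c * b * (b * c * b) = b * c * b * (c * b * c) := congrArg (b * c * b * ·) hb
      calc c * b ^ 2 * c * b ^ 2 = c * b * (b * c * b) * b := by simp only [pow_two, mul_assoc]
        _ = (c * b * c) * b * c * b := by rw [hb]; simp only [mul_assoc]
        _ = b * c * b * (b * c * b) := by rw [← hb]; simp only [mul_assoc]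
        _ = b * (c * b * c) * b * c := by rw [h5]; simp only [mul_assoc]
        _ = _ := by rw [← hb]; simp only [pow_two, mul_assoc]
    · exact R4_braid hb (H.bt 1 i (by omega) (by omega) (by omega))
        (H.r4 i (by omega) (by omega))
  · intro i j hi hk hj
    have h1 := (H.comm 0 (i+1) (by omega) (by omega)).symm
    split_ifs with h
    · exact h1.pow_right 2
    · exact (h1.mul_right (H.bt _ _ (by omega) (by omega) (by omega))).mul_right h1.inv_right
  · intro i j hk hij hj
    have hb := H.braid 0 (by omega)
    have ci := H.bt 1 i le_rfl (by omega) (by omega)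
    have h1 := braid_conj hb ci
    simp only [if_neg (show i ≠ g by omega)]
    split_ifs with h
    · exact (h1.symm.pow_right 2)
    · have cj := H.bt 1 j le_rfl (by omega) (by omega)
      have h2 := commute_conj (commute_conj (H.cc i j (by omega) hij (by omega)) (β 1)) (β 0)
      rw [show β 1 * τ j * (β 1)⁻¹ = τ j by rw [cj.eq]; group] at h2
      unfold CC
      convert h2 using 1
      have := h1.eq
      simp only [zero_add]
      calc _ = (β 1 * (β 0 * τ i * (β 0)⁻¹) * (β 1)⁻¹) * β 0 * (β 0)⁻¹ := by group
        _ = _ := by rw [← this]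

theorem exists_psi (g k : ℕ) :
    ∃ ψ : HandlebodyBraidGroup (g+1) (k+1) →* HandlebodyBraidGroup g (k+2),
      Function.Injective ψ ∧
      (∀ i, i < k → ψ (nb _ _ i) = nb _ _ (i+1)) ∧
      (∀ j, j < g → ψ (nt _ _ j) = nb _ _ 0 * nt _ _ j * (nb _ _ 0)⁻¹) ∧
      ψ (nt _ _ g) = nb _ _ 0 ^ 2 := by
  obtain ⟨ψ, p1, p2⟩ := exists_hom (n := k+1) (hdata g (k+2)).down
  have p3 : ∀ j, j < g → ψ (nt _ _ j) = nb _ _ 0 * nt _ _ j * (nb _ _ 0)⁻¹ := by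
    intro j hj
    rw [p2 j (by omega), if_neg (by omega)]
  have p4 : ψ (nt _ _ g) = nb _ _ 0 ^ 2 := by
    rw [p2 g (by omega), if_pos rfl]
  refine ⟨ψ, ?_, p1, p3, p4⟩
  have hα : ∀ j, ∃ α : MulAut (HandlebodyBraidGroup (g+1) (k+1)), j < g →
    (∀ i, i < k → α (nb _ _ i) = nb _ _ i) ∧
    (∀ i, i ≤ g → α (nt _ _ i) = al (nt _ _) g j i) := by
    intro j
    by_cases hj : j < g
    · obtain ⟨α, h⟩ := exists_aut g (k+1) j hj
      exact ⟨α, fun _ => h⟩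
    · exact ⟨1, fun h => absurd h hj⟩
  choose α hα using hα
  have hact := act (k := k) (hdata (g+1) (k+1)) (fun j i hj => (hα j hj).1 i)
    (fun j i hj => (hα j hj).2 i)
  obtain ⟨ρ, r1, r2⟩ := exists_hom (n := k+2) hact
  have key : ∀ h a, ρ (ψ h) (0, a) = (0, h * a) := by
    let S : Subgroup (HandlebodyBraidGroup (g+1) (k+1)) :=
      { carrier := {h | ∀ a, ρ (ψ h) (0, a) = (0, h * a)}
        mul_mem' := by
          intro x y hx hy a
          simp only [Set.mem_ofPred_eq] at hx hy
          simp [hx, hy, mul_assoc]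
        one_mem' := by intro a; simp
        inv_mem' := by
          intro x hx a
          simp only [Set.mem_ofPred_eq] at hx
          rw [map_inv, map_inv, Equiv.Perm.inv_eq_iff_eq, hx]; simp }
    have hS : ∀ h, h ∈ S := by
      apply PresentedGroup.generated_by
      rintro (⟨i, hi⟩ | ⟨j, hj⟩)
      · have e : (PresentedGroup.of (Sum.inl ⟨i, hi⟩) : HandlebodyBraidGroup (g+1) (k+1)) =
          nb _ _ i := by simp only [nb, dif_pos hi]; rfl
        have hi' : i < k := hi
        intro a
        rw [e, p1 i hi, r1 (i+1) (by omega), B_lt (by omega)]; rfl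
      · have e : (PresentedGroup.of (Sum.inr ⟨j, hj⟩) : HandlebodyBraidGroup (g+1) (k+1)) =
          nt _ _ j := by simp only [nt, dif_pos hj]; rfl
        intro a
        rw [e]
        by_cases h : j = g
        · subst h
          rw [p4, map_pow, r1 0 (by omega), pow_two, Equiv.Perm.mul_apply, B_eq rfl, B_succ rfl]
          rfl
        · rw [p3 j (by omega), map_mul, map_mul, map_inv, r1 0 (by omega), r2 j (by omega)]
          rw [Equiv.Perm.mul_apply, Equiv.Perm.mul_apply, B0i_zero, T_pos (by omega), B_succ rfl]
          simp [om, mul_assoc]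
    exact hS
  intro x y hxy
  have := key x 1
  rw [hxy, key y 1] at this
  simpa using this.symm

/-- braid group generators indexed by naturals -/
def ng (m i : ℕ) : BraidGroup m := if h : i < m - 1 then braidGen ⟨i, h⟩ else 1

theorem base (m : ℕ) : ∃ φ : HandlebodyBraidGroup 0 m →* BraidGroup m, Function.Injective φ ∧
    ∀ i, i < m - 1 → φ (nb _ _ i) = ng m i := by
  have H : HData 0 (m-1) (ng m) (fun _ => 1) := by
    refine ⟨?_, ?_, fun i _ h => by omega, fun i j _ _ h => by omega,
      fun i j _ _ h => by omega⟩
    · intro i hi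
      have h : i < m - 1 := by omega
      simp only [ng, hi, h, dif_pos]
      exact rel_eq ⟨⟨i, h⟩, ⟨i+1, hi⟩, Or.inl ⟨rfl, rfl⟩⟩
    · intro i j hij hj
      have h : i < m - 1 := by omega
      simp only [ng, hj, h, dif_pos]
      exact rel_eq ⟨⟨i, h⟩, ⟨j, hj⟩, Or.inr ⟨hij, rfl⟩⟩
  obtain ⟨φ, h1, -⟩ := exists_hom H
  refine ⟨φ, ?_, h1⟩
  have D := hdata 0 m
  have hF : ∀ r ∈ braidRels (m-1), FreeGroup.lift (fun i : Fin (m-1) => nb 0 m i) r = 1 := by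
    rintro r ⟨i, j, ⟨hij, rfl⟩ | ⟨hij, rfl⟩⟩
    · simp only [map_mul, map_inv, FreeGroup.lift_apply_of]
      rw [mul_inv_eq_one, ← hij]
      exact D.braid _ (by omega)
    · simp only [map_mul, map_inv, FreeGroup.lift_apply_of]
      rw [mul_inv_eq_one]
      exact D.comm _ _ hij (by omega)
  have : (PresentedGroup.toGroup hF).comp φ = MonoidHom.id _ := by
    apply hom_ext
    · intro i hi
      rw [MonoidHom.comp_apply, h1 i hi]
      simp [ng, hi, braidGen]
    · intro j hj; omega
  exact Function.LeftInverse.injective (g := PresentedGroup.toGroup hF)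
    (fun x => DFunLike.congr_fun this x)

theorem main (g : ℕ) : ∀ k m : ℕ, m = g + (k+1) →
    ∃ φ : HandlebodyBraidGroup g (k+1) →* BraidGroup m, Function.Injective φ ∧
      (∀ i, i < k → φ (nb _ _ i) = ng m (g+i)) ∧
      (∀ j, j < g → φ (nt _ _ j) =
        ((List.range (g - 1 - j)).map (fun t => ng m (g - 1 - t))).prod * ng m j ^ 2 *
        (((List.range (g - 1 - j)).map (fun t => ng m (g - 1 - t))).prod)⁻¹) := by
  induction g with
  | zero =>
    intro k m hm
    obtain rfl : m = k + 1 := by omega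
    obtain ⟨φ, h1, h2⟩ := base (k+1)
    refine ⟨φ, h1, ?_, fun j hj => by omega⟩
    intro i hi
    rw [zero_add]
    exact h2 i hi
  | succ g ih =>
    intro k m hm
    obtain ⟨φ, h1, h2, h3⟩ := ih (k+1) m (by omega)
    obtain ⟨ψ, q1, q2, q3, q4⟩ := exists_psi g k
    refine ⟨φ.comp ψ, h1.comp q1, ?_, ?_⟩
    · intro i hi
      rw [MonoidHom.comp_apply, q2 i hi, h2 (i+1) (by omega)]
      congr 1; omega
    · intro j hj
      rw [MonoidHom.comp_apply]
      by_cases h : j = g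
      · subst h
        rw [q4, map_pow, h2 0 (by omega)]
        simp
      · rw [q3 j (by omega), map_mul, map_mul, map_inv, h2 0 (by omega), h3 j (by omega)]
        have e : g + 1 - 1 - j = (g - 1 - j) + 1 := by omega
        rw [e, List.range_succ_eq_map, List.map_cons, List.prod_cons, List.map_map]
        have e2 : ((fun t => ng m (g + 1 - 1 - t)) ∘ Nat.succ) = fun t => ng m (g - 1 - t) := by
          funext t
          simp only [Function.comp]
          congr 1; omega
        rw [e2]
        simp [mul_assoc]

end HB

/-- the group homomorphism `φ_{g,n} : H_{g,n} → B_{g+n}` determined by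
`β_i ↦ s_{g+i}` (for `1 ≤ i ≤ n-1`) and
`τ_j ↦ (s_g s_{g-1} ⋯ s_{j+1}) s_j² (s_{j+1}⁻¹ ⋯ s_g⁻¹)` (for `1 ≤ j ≤ g`)
is injective; i.e. `H_{g,n}` embeds as a subgroup of `B_{g+n}`.
(Indices of generators are `0`-based.) -/
theorem handlebody_braid_group_embeds (g n : ℕ) (hn : 1 ≤ n)
    (φ : HandlebodyBraidGroup g n →* BraidGroup (g + n))
    (hφβ : ∀ i : Fin (n - 1), φ (hβ i) = braidGen ⟨g + i.val, by have := i.isLt; omega⟩)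
    (hφτ : ∀ j : Fin g,
        φ (hτ j) =
          (((List.range (g - 1 - j.val)).map
              (fun t => braidGen (m := g + n) ⟨g - 1 - t, by have := j.isLt; omega⟩)).prod) *
            braidGen (m := g + n) ⟨j.val, by have := j.isLt; omega⟩ ^ 2 *
          (((List.range (g - 1 - j.val)).map
              (fun t => braidGen (m := g + n) ⟨g - 1 - t, by have := j.isLt; omega⟩)).prod)⁻¹) :
    Function.Injective φ := by
  obtain ⟨k, rfl⟩ : ∃ k, n = k + 1 := ⟨n - 1, by omega⟩
  obtain ⟨φ', h1, h2, h3⟩ := HB.main g k (g + (k+1)) rfl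
  have e : φ = φ' := by
    apply HB.hom_ext
    · intro i hi
      have hi' : g + i < g + (k + 1) - 1 := by omega
      rw [h2 i hi]
      simp only [HB.nb, HB.ng, dif_pos hi, dif_pos hi']
      exact hφβ ⟨i, hi⟩
    · intro j hj
      rw [h3 j hj]
      have hj' : j < g + (k + 1) - 1 := by omega
      have e1 : (fun t => HB.ng (g + (k+1)) (g - 1 - t)) =
          (fun t => braidGen (m := g + (k+1)) ⟨g - 1 - t, by omega⟩) := by
        funext t
        have ht : g - 1 - t < g + (k + 1) - 1 := by omega
        simp only [HB.ng, dif_pos ht]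
      rw [e1]
      simp only [HB.nt, HB.ng, dif_pos hj, dif_pos hj']
      exact hφτ ⟨j, hj⟩
  rw [e]
  exact h1
end

section
/- The Demazure operators ∂_i on R = K[x_1, …, x_N] satisfy: ∂_i ∘ ∂_i = 0 for all 1 ≤ i ≤ N−1; ∂_i ∘ ∂_j = ∂_j ∘ ∂_i whenever |i−j| ≥ 2; and the braid relation ∂_i ∘ ∂_{i+1} ∘ ∂_i = ∂_{i+1} ∘ ∂_i ∘ ∂_{i+1} for all 1 ≤ i ≤ N−2. -/
/-!
STATEMENT 6: the Demazure operators `∂_i` on `R = K[x_1, ..., x_N]` satisfy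
`∂_i∂_i = 0`, far-commutativity `∂_i∂_j = ∂_j∂_i` for `|i-j| ≥ 2`, and the
braid relation `∂_i∂_{i+1}∂_i = ∂_{i+1}∂_i∂_{i+1}`.
-/

open MvPolynomial

/-- The composite of three divided differences, cleared of denominators. -/
lemma braid_core {R : Type*} [CommRing R] [IsDomain R] (s t : R →+* R) (a b : R) (ha : a ≠ 0)
    (sa : s a = -a) (sb : s b = a + b) (ta : t a = a + b)
    (ss : ∀ f, s (s f) = f) (f u v w : R)
    (hu : a * u = f - s f) (hv : b * v = u - t u) (hw : a * w = v - s v) :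
    a * b * (a + b) * w = f - s f - t f + t (s f) + s (t f) - s (t (s f)) := by
  have h1 := congrArg t hu
  simp only [map_mul, map_sub, ta] at h1
  have h2 : a * (a + b) * b * v = (a + b) * (f - s f) - a * (t f - t (s f)) := by
    linear_combination a * (a + b) * hv + (a + b) * hu - a * h1
  have h3 := congrArg s h2
  simp only [map_mul, map_sub, map_add, sa, sb, ss] at h3
  apply mul_left_cancel₀ ha
  linear_combination a * b * (a + b) * hw + h2 + h3

/-- let `D i` be the Demazure operator `∂_{i}` on
`R = K[x_1, ..., x_N]`, characterized (uniquely) by the identity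
`(x_i - x_{i+1}) * D i f = f - s_i·f` for all `f`, where `s_i` exchanges the
variables `x_i` and `x_{i+1}`.  Then: `∂_i ∘ ∂_i = 0`; `∂_i ∘ ∂_j = ∂_j ∘ ∂_i`
whenever `|i - j| ≥ 2`; and `∂_i ∘ ∂_{i+1} ∘ ∂_i = ∂_{i+1} ∘ ∂_i ∘ ∂_{i+1}`.
(Indices are elements of `Fin N`; `i' = i+1` etc.) -/
theorem demazure_operators_satisfy_braid_relations
    (K : Type*) [Field K] [CharZero K] (N : ℕ)
    (D : Fin N → MvPolynomial (Fin N) K → MvPolynomial (Fin N) K)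
    (hD : ∀ i i' : Fin N, i.val + 1 = i'.val →
      ∀ f, (X i - X i') * D i f = f - rename (⇑(Equiv.swap i i')) f) :
    (∀ i i' : Fin N, i.val + 1 = i'.val → ∀ f, D i (D i f) = 0) ∧
    (∀ i j : Fin N, i.val + 2 ≤ j.val → j.val + 1 < N →
      ∀ f, D i (D j f) = D j (D i f)) ∧
    (∀ i j : Fin N, i.val + 1 = j.val → j.val + 1 < N →
      ∀ f, D i (D j (D i f)) = D j (D i (D j f))) := by
  have hne : ∀ i i' : Fin N, i.val + 1 = i'.val →
      (X i - X i' : MvPolynomial (Fin N) K) ≠ 0 := by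
    intro i i' h h0
    have := X_injective (R := K) (sub_eq_zero.mp h0)
    rw [this] at h
    omega
  have hss : ∀ (i i' : Fin N) (f : MvPolynomial (Fin N) K),
      rename (⇑(Equiv.swap i i')) (rename (⇑(Equiv.swap i i')) f) = f := by
    intro i i' f
    rw [rename_rename]
    have : (⇑(Equiv.swap i i') ∘ ⇑(Equiv.swap i i')) = id := by
      funext x; simp
    rw [this, rename_id_apply]
  refine ⟨?_, ?_, ?_⟩
  · intro i i' h f
    have h1 := hD i i' h f
    have h2 := hD i i' h (D i f)
    have h3 := congrArg (rename (⇑(Equiv.swap i i'))) h1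
    simp only [map_mul, map_sub, rename_X, Equiv.swap_apply_left, Equiv.swap_apply_right,
      hss] at h3
    apply mul_left_cancel₀ (hne i i' h)
    apply mul_left_cancel₀ (hne i i' h)
    linear_combination (X i - X i') * h2 + h1 + h3
  · intro i j hij hj f
    obtain ⟨i', hi'⟩ : ∃ i' : Fin N, i.val + 1 = i'.val := ⟨⟨i.val + 1, by omega⟩, rfl⟩
    obtain ⟨j', hj'⟩ : ∃ j' : Fin N, j.val + 1 = j'.val := ⟨⟨j.val + 1, by omega⟩, rfl⟩
    have n1 : i ≠ j := by intro h; subst h; omega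
    have n2 : i ≠ j' := by intro h; subst h; omega
    have n3 : i' ≠ j := by intro h; subst h; omega
    have n4 : i' ≠ j' := by intro h; subst h; omega
    have h1 := hD i i' hi' f
    have h2 := hD j j' hj' f
    have h3 := hD i i' hi' (D j f)
    have h4 := hD j j' hj' (D i f)
    have h5 := congrArg (rename (⇑(Equiv.swap j j'))) h1
    have h6 := congrArg (rename (⇑(Equiv.swap i i'))) h2
    simp only [map_mul, map_sub, rename_X, Equiv.swap_apply_of_ne_of_ne n1 n2,
      Equiv.swap_apply_of_ne_of_ne n3 n4] at h5
    simp only [map_mul, map_sub, rename_X, Equiv.swap_apply_of_ne_of_ne n1.symm n3.symm,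
      Equiv.swap_apply_of_ne_of_ne n2.symm n4.symm] at h6
    have hst : rename (⇑(Equiv.swap i i')) (rename (⇑(Equiv.swap j j')) f)
        = rename (⇑(Equiv.swap j j')) (rename (⇑(Equiv.swap i i')) f) := by
      rw [rename_rename, rename_rename]
      congr 2
      funext x
      simp only [Function.comp, Equiv.swap_apply_def]
      grind
    apply mul_left_cancel₀ (hne i i' hi')
    apply mul_left_cancel₀ (hne j j' hj')
    linear_combination (X j - X j') * h3 + h2 - h6 - (X i - X i') * h4 - h1 + h5 + hst
  · intro i j hij hj f
    obtain ⟨k, hk⟩ : ∃ k : Fin N, j.val + 1 = k.val := ⟨⟨j.val + 1, by omega⟩, rfl⟩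
    have n1 : i ≠ j := by intro h; subst h; omega
    have n2 : i ≠ k := by intro h; subst h; omega
    have n3 : j ≠ k := by intro h; subst h; omega
    have sk : Equiv.swap i j k = k := Equiv.swap_apply_of_ne_of_ne n2.symm n3.symm
    have ti : Equiv.swap j k i = i := Equiv.swap_apply_of_ne_of_ne n1 n2
    have e1 := braid_core (rename (R := K) (⇑(Equiv.swap i j))).toRingHom
      (rename (R := K) (⇑(Equiv.swap j k))).toRingHom (X i - X j) (X j - X k) (hne i j hij)
      (by simp) (by simp [sk]) (by simp [ti]) (hss i j) f _ _ _
      (hD i j hij f) (hD j k hk (D i f)) (hD i j hij (D j (D i f)))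
    have e2 := braid_core (rename (R := K) (⇑(Equiv.swap j k))).toRingHom
      (rename (R := K) (⇑(Equiv.swap i j))).toRingHom (X j - X k) (X i - X j) (hne j k hk)
      (by simp) (by simp [ti]) (by simp [sk]) (hss j k) f _ _ _
      (hD j k hk f) (hD i j hij (D j f)) (hD j k hk (D i (D j f)))
    have hst : rename (⇑(Equiv.swap i j)) (rename (⇑(Equiv.swap j k))
          (rename (⇑(Equiv.swap i j)) f))
        = rename (⇑(Equiv.swap j k)) (rename (⇑(Equiv.swap i j))
          (rename (⇑(Equiv.swap j k)) f)) := by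
      simp only [rename_rename]
      congr 2
      funext x
      simp only [Function.comp, Equiv.swap_apply_def]
      grind
    simp only [AlgHom.toRingHom_eq_coe, RingHom.coe_coe] at e1 e2
    have hik : (X i - X k : MvPolynomial (Fin N) K) ≠ 0 := fun h0 =>
      n2 (X_injective (R := K) (sub_eq_zero.mp h0))
    apply mul_left_cancel₀ (hne i j hij)
    apply mul_left_cancel₀ (hne j k hk)
    apply mul_left_cancel₀ hik
    linear_combination e1 - e2 - hst
end

section
/- Fix 1 ≤ i ≤ N−1 and set α = x_i − x_{i+1}. Then R = K[x_1, …, x_N] is a free module over R^{s_i} with basis {1, α/2}; that is, every f ∈ R is uniquely expressible as f = a + b·(α/2) with a, b ∈ R^{s_i}. Moreover, setting a_1 = 1, a_2 = α/2 and a_1* = α/2, a_2* = 1, the Demazure operator satisfies ∂_i(a_p · a_q*) = δ_{pq} for p, q ∈ {1, 2}; i.e., {1, α/2} and {α/2, 1} are dual bases for the Frobenius extension R^{s_i} ⊆ R with trace ∂_i. -/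
/-!
STATEMENT 7: `R = K[x_1, ..., x_N]` is free over `R^{s_i}` with basis
`{1, α/2}` where `α = x_i - x_{i+1}`, and `{1, α/2}`, `{α/2, 1}` are dual bases
for the Frobenius extension `R^{s_i} ⊆ R` with trace the Demazure operator `∂_i`.
-/

open MvPolynomial

/-- fix adjacent indices `i`, `i' = i+1` in `Fin N`, set
`α = x_i - x_{i'}`, and let `D = ∂_i` be the Demazure operator, characterized by
`(x_i - x_{i'}) * D f = f - s_i·f`.  Then every `f ∈ R = K[x_1, ..., x_N]` is
*uniquely* expressible as `f = a + b·(α/2)` with `a`, `b` invariant under `s_i`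
(i.e. `R` is free over `R^{s_i}` with basis `{1, α/2}`), and with
`a₁ = 1, a₂ = α/2` and `a₁* = α/2, a₂* = 1` one has `∂_i(a_p · a_q*) = δ_{pq}`:
`∂_i(1·(α/2)) = 1`, `∂_i(1·1) = 0`, `∂_i((α/2)·(α/2)) = 0`, `∂_i((α/2)·1) = 1`. -/
theorem dual_bases_for_demazure_frobenius_extension
    (K : Type*) [Field K] [CharZero K] (N : ℕ) (i i' : Fin N)
    (h : i.val + 1 = i'.val)
    (D : MvPolynomial (Fin N) K → MvPolynomial (Fin N) K)
    (hD : ∀ f, (X i - X i') * D f = f - rename (⇑(Equiv.swap i i')) f) :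
    (∀ f : MvPolynomial (Fin N) K,
      ∃! p : MvPolynomial (Fin N) K × MvPolynomial (Fin N) K,
        rename (⇑(Equiv.swap i i')) p.1 = p.1 ∧
        rename (⇑(Equiv.swap i i')) p.2 = p.2 ∧
        f = p.1 + p.2 * (C (2⁻¹ : K) * (X i - X i'))) ∧
    D ((1 : MvPolynomial (Fin N) K) * (C (2⁻¹ : K) * (X i - X i'))) = 1 ∧
    D ((1 : MvPolynomial (Fin N) K) * 1) = 0 ∧
    D ((C (2⁻¹ : K) * (X i - X i')) * (C (2⁻¹ : K) * (X i - X i'))) = 0 ∧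
    D ((C (2⁻¹ : K) * (X i - X i')) * 1) = 1 := by
  have hne : i ≠ i' := by
    rintro rfl
    omega
  have hα : (X i - X i' : MvPolynomial (Fin N) K) ≠ 0 := by
    rw [sub_ne_zero]
    exact fun e => hne (X_injective e)
  have h2 : (2 : MvPolynomial (Fin N) K) * C (2⁻¹ : K) = 1 := by
    rw [show (2 : MvPolynomial (Fin N) K) = C (2 : K) from (map_ofNat C 2).symm, ← C_mul,
      mul_inv_cancel₀ (two_ne_zero), C_1]
  have hss : ∀ f : MvPolynomial (Fin N) K,
      rename (⇑(Equiv.swap i i')) (rename (⇑(Equiv.swap i i')) f) = f := by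
    intro f
    rw [rename_rename]
    have : (⇑(Equiv.swap i i') ∘ ⇑(Equiv.swap i i')) = id := by
      funext x
      simp
    rw [this, rename_id_apply]
  have hsα : rename (⇑(Equiv.swap i i')) (X i - X i' : MvPolynomial (Fin N) K)
      = -(X i - X i') := by
    simp
  have hsC : rename (⇑(Equiv.swap i i')) (C (2⁻¹ : K) : MvPolynomial (Fin N) K)
      = C (2⁻¹ : K) := rename_C _ _
  generalize (C (2⁻¹ : K) : MvPolynomial (Fin N) K) = c at *
  generalize (X i - X i' : MvPolynomial (Fin N) K) = α at *
  generalize rename (R := K) (⇑(Equiv.swap i i')) = s at *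
  refine ⟨fun f => ⟨(c * (f + s f), D f), ⟨?_, ?_, ?_⟩, ?_⟩, ?_, ?_, ?_, ?_⟩
  · simp only [map_mul, map_add, hsC, hss]
    ring
  · apply mul_left_cancel₀ hα
    have := congrArg s (hD f)
    simp only [map_mul, map_sub, hsα, hss] at this
    linear_combination -this - hD f
  · simp only
    linear_combination (-c) * hD f - f * h2
  · rintro ⟨a, b⟩ ⟨ha, hb, hf⟩
    simp only at ha hb hf
    have hsf : s f = a - b * (c * α) := by
      rw [hf]
      simp only [map_mul, map_add, hsC, hsα, ha, hb]
      ring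
    have hb' : b = D f := by
      apply mul_left_cancel₀ hα
      linear_combination (-hD f) - hf + hsf - b * α * h2
    have ha' : a = c * (f + s f) := by
      linear_combination (-c) * hf - c * hsf - a * h2
    rw [← hb', ← ha']
  all_goals
    apply mul_left_cancel₀ hα
    rw [hD]
    simp only [map_mul, map_one, hsC, hsα]
  · linear_combination α * h2
  · ring
  · ring
  · linear_combination α * h2
end

section
/- Fix 1 ≤ i ≤ N−1 and let F_i and F_i' be the Rouquier complexes of R-bimodules associated to the positive and negative elementary braid. Then both F_i ⊗_R F_i' and F_i' ⊗_R F_i are homotopy equivalent, as complexes of R-bimodules, to the complex consisting of R concentrated in homological degree 0. In particular F_i is invertible in the homotopy category of complexes of R-bimodules, with inverse F_i'. -/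
set_option synthInstance.maxHeartbeats 1000000
set_option maxHeartbeats 1000000
set_option linter.unusedSectionVars false

open MvPolynomial TensorProduct

noncomputable section

/-- The polynomial ring `R = K[x_1, ..., x_N]`. -/
abbrev Rp (K : Type) [Field K] (N : ℕ) := MvPolynomial (Fin N) K

variable (K : Type) [Field K] [CharZero K] (N : ℕ)

/-- The invariant ring `R^{s}` of the transposition `s` exchanging `x_i` and `x_j`. -/
def swapInv (i j : Fin N) : Subalgebra K (Rp K N) where
  carrier := {f | rename (⇑(Equiv.swap i j)) f = f}
  mul_mem' := by
    intro a b ha hb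
    simp only [Set.mem_setOf_eq, map_mul] at *
    rw [ha, hb]
  one_mem' := by simp only [Set.mem_setOf_eq, map_one]
  add_mem' := by
    intro a b ha hb
    simp only [Set.mem_setOf_eq, map_add] at *
    rw [ha, hb]
  zero_mem' := by simp only [Set.mem_setOf_eq, map_zero]
  algebraMap_mem' := by
    intro c
    simp [Set.mem_setOf_eq, MvPolynomial.algebraMap_eq]

/-- The Soergel bimodule `B_i = R ⊗_{R^{s_i}} R`. -/
abbrev BS (i j : Fin N) := TensorProduct ↥(swapInv K N i j) (Rp K N) (Rp K N)

/-- The enveloping algebra `S = R ⊗_K R`; an `S`-module is an `R`-bimodule. -/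
abbrev SEnv := TensorProduct K (Rp K N) (Rp K N)

/-- `R` as `S`-module (the regular bimodule) via the multiplication map. -/
instance : Module (SEnv K N) (Rp K N) :=
  (Algebra.TensorProduct.lmul' K (S := Rp K N)).toRingHom.toModule

/-- The canonical `K`-algebra map `S = R ⊗_K R → B_i`, `a ⊗ b ↦ a ⊗ b`. -/
def toBS (i j : Fin N) : SEnv K N →ₐ[K] BS K N i j :=
  Algebra.TensorProduct.productMap
    (Algebra.TensorProduct.includeLeft (S := K))
    ((Algebra.TensorProduct.includeRight).restrictScalars K)

/-- `B_i` as `S`-module: the left `R`-action on the left tensor factor, the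
right `R`-action on the right tensor factor. -/
instance (i j : Fin N) : Module (SEnv K N) (BS K N i j) :=
  (toBS K N i j).toRingHom.toModule

end

/-!
STATEMENT 10: invertibility of Rouquier complexes.  For the two-term complexes
of `R`-bimodules `F_i = (B_i → R)` (degrees 1, 0; differential the
multiplication map) and `F_i' = (R → B_i)` (degrees 0, -1; differential
`f ↦ (1/2)·f·((x_i - x_{i+1}) ⊗ 1 + 1 ⊗ (x_i - x_{i+1}))`), both tensor product
complexes `F_i ⊗_R F_i'` and `F_i' ⊗_R F_i` are homotopy equivalent to the
complex `R` concentrated in homological degree `0`; in particular `F_i` is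
invertible in the homotopy category of complexes of `R`-bimodules, with
inverse `F_i'`.

Below, an `R`-bimodule is a module over `S = R ⊗_K R`; `B_i ⊗_R B_i` is
realized as `T_i = R ⊗_{R^{s_i}} B_i` via `(x ⊗ y) ⊗ (z ⊗ w) ↦ x ⊗ (yz ⊗ w)`,
and the tensor product complexes are realized (using the canonical unitor
identifications `B_i ⊗_R R ≅ B_i ≅ R ⊗_R B_i` and `R ⊗_R R ≅ R`) as
`F_i ⊗_R F_i' = (B_i → T_i × R → B_i)` in degrees 1, 0, -1 (and similarly for
`F_i' ⊗_R F_i`), with the Koszul-sign differentials uniquely determined by the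
formulas below.  A homotopy equivalence with `R` concentrated in degree `0` is
spelled out as the data of chain maps in both directions together with
homotopies; `α/2 = C (2⁻¹) * (X i - X i')` is abbreviated `hlf`. -/

noncomputable section
variable (K : Type) [Field K] [CharZero K] (N : ℕ)

/-- `T_i = R ⊗_{R^{s_i}} B_i`, the model of `B_i ⊗_R B_i`. -/
abbrev TS (i j : Fin N) := TensorProduct ↥(swapInv K N i j) (Rp K N) (BS K N i j)

/-- The canonical `K`-algebra map `S → T_i`, `a ⊗ b ↦ a ⊗ (1 ⊗ b)`. -/
def toTS (i j : Fin N) : SEnv K N →ₐ[K] TS K N i j :=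
  Algebra.TensorProduct.productMap (R := K) (S := TS K N i j)
    (Algebra.TensorProduct.includeLeft (S := K))
    ((Algebra.TensorProduct.includeRight.restrictScalars K :
        BS K N i j →ₐ[K] TS K N i j).comp
      (Algebra.TensorProduct.includeRight.restrictScalars K :
        Rp K N →ₐ[K] BS K N i j))

/-- `T_i = B_i ⊗_R B_i` as `S`-module (`R`-bimodule): left `R`-action on the
leftmost factor, right `R`-action on the rightmost factor. -/
instance (i j : Fin N) : Module (SEnv K N) (TS K N i j) :=
  (toTS K N i j).toRingHom.toModule

/-- Half the root: `α/2 = (x_i - x_j)/2`. -/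
def hlf (i j : Fin N) : Rp K N := C (2⁻¹ : K) * (X i - X j)

end


section Helpers
variable {K : Type} [Field K] [CharZero K] {N : ℕ}

theorem two_inv_C : (C (2⁻¹ : K) : Rp K N) * 2 = 1 := by
  have : (2 : Rp K N) = C (2 : K) := (map_ofNat C 2).symm
  rw [this, ← C_mul, inv_mul_cancel₀ two_ne_zero, C_1]

theorem hlf_ne (i j : Fin N) (h : i ≠ j) : hlf K N i j ≠ 0 := by
  unfold hlf
  refine mul_ne_zero ?_ ?_
  · simp
  · rw [sub_ne_zero]
    exact fun e => h (X_injective e)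

theorem swap_hlf (i j : Fin N) :
    rename (⇑(Equiv.swap i j)) (hlf K N i j) = - hlf K N i j := by
  simp only [hlf, map_mul, map_sub, rename_C, rename_X, Equiv.swap_apply_left,
    Equiv.swap_apply_right]
  ring

theorem dvd_swap (i j : Fin N) (f : Rp K N) :
    (X i - X j : Rp K N) ∣ f - rename (⇑(Equiv.swap i j)) f := by
  induction f using MvPolynomial.induction_on with
  | C c => simp
  | add p q hp hq =>
    have := dvd_add hp hq
    rw [map_add]
    convert this using 1
    ring
  | mul_X p k hp =>
    rw [map_mul, rename_X]
    have e : p * X k - rename (⇑(Equiv.swap i j)) p * X (Equiv.swap i j k)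
      = (p - rename (⇑(Equiv.swap i j)) p) * X k
        + rename (⇑(Equiv.swap i j)) p * (X k - X (Equiv.swap i j k)) := by ring
    rw [e]
    refine dvd_add (Dvd.dvd.mul_right hp _) (Dvd.dvd.mul_left ?_ _)
    by_cases h1 : k = i
    · subst h1; simp
    · by_cases h2 : k = j
      · subst h2
        rw [Equiv.swap_apply_right]
        exact ⟨-1, by ring⟩
      · rw [Equiv.swap_apply_of_ne_of_ne h1 h2]; simp

theorem exists_dem (i j : Fin N) (f : Rp K N) :
    ∃ q : Rp K N, f - rename (⇑(Equiv.swap i j)) f = q * (2 * hlf K N i j) := by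
  obtain ⟨q, hq⟩ := dvd_swap i j f
  refine ⟨q, ?_⟩
  rw [hq, hlf]
  linear_combination (-q * (X i - X j)) * (two_inv_C (K := K) (N := N))

/-- The Demazure operator, as a function. -/
noncomputable def demFun (i j : Fin N) (f : Rp K N) : Rp K N := (exists_dem i j f).choose

theorem demFun_spec (i j : Fin N) (f : Rp K N) :
    f - rename (⇑(Equiv.swap i j)) f = demFun i j f * (2 * hlf K N i j) :=
  (exists_dem i j f).choose_spec

theorem two_hlf_ne (i j : Fin N) (h : i ≠ j) : 2 * hlf K N i j ≠ 0 :=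
  mul_ne_zero two_ne_zero (hlf_ne i j h)

theorem demFun_eq (i j : Fin N) (h : i ≠ j) (f q : Rp K N)
    (e : f - rename (⇑(Equiv.swap i j)) f = q * (2 * hlf K N i j)) : demFun i j f = q :=
  mul_right_cancel₀ (two_hlf_ne i j h) ((demFun_spec i j f).symm.trans e)

/-- The Demazure operator, linear over the invariants. -/
noncomputable def dem (i j : Fin N) (h : i ≠ j) : Rp K N →ₗ[swapInv K N i j] Rp K N where
  toFun := demFun i j
  map_add' f g := by
    apply demFun_eq i j h
    rw [map_add]
    linear_combination demFun_spec i j f + demFun_spec i j g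
  map_smul' c f := by
    apply demFun_eq i j h
    have hc : rename (⇑(Equiv.swap i j)) (c : Rp K N) = c := c.2
    rw [Subalgebra.smul_def, smul_eq_mul, map_mul, hc, RingHom.id_apply, Subalgebra.smul_def,
      smul_eq_mul]
    linear_combination (c : Rp K N) * demFun_spec i j f

theorem dem_one (i j : Fin N) (h : i ≠ j) : dem (K := K) i j h 1 = 0 :=
  demFun_eq i j h _ _ (by simp)

theorem dem_hlf (i j : Fin N) (h : i ≠ j) : dem i j h (hlf K N i j) = 1 :=
  demFun_eq i j h _ _ (by rw [swap_hlf]; ring)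

theorem swap_swap (i j : Fin N) (f : Rp K N) :
    rename (⇑(Equiv.swap i j)) (rename (⇑(Equiv.swap i j)) f) = f := by
  rw [rename_rename]
  have : (⇑(Equiv.swap i j) ∘ ⇑(Equiv.swap i j)) = id := by
    funext k; simp
  rw [this, rename_id_apply]

/-- `y = y₀ + y₁ a` with `y₀, y₁` invariant. -/
theorem exists_decomp (i j : Fin N) (h : i ≠ j) (y : Rp K N) :
    ∃ y₀ y₁ : swapInv K N i j, y = (y₀ : Rp K N) * 1 + (y₁ : Rp K N) * hlf K N i j := by
  have hs := demFun_spec i j y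
  have h1 : rename (⇑(Equiv.swap i j)) (demFun i j y) = demFun i j y := by
    have h2 := congrArg (rename (⇑(Equiv.swap i j))) hs
    rw [map_sub, swap_swap, map_mul, map_mul, swap_hlf, map_ofNat] at h2
    apply mul_right_cancel₀ (two_hlf_ne i j h)
    linear_combination hs + h2
  refine ⟨⟨y - demFun i j y * hlf K N i j, ?_⟩, ⟨demFun i j y, h1⟩, ?_⟩
  · change rename (⇑(Equiv.swap i j)) _ = _
    rw [map_sub, map_mul, h1, swap_hlf]
    linear_combination - hs
  · simp

theorem smul_R (u v r : Rp K N) : (u ⊗ₜ[K] v : SEnv K N) • r = u * v * r := by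
  change (Algebra.TensorProduct.lmul' K (S := Rp K N)) (u ⊗ₜ v) * r = _
  rw [Algebra.TensorProduct.lmul'_apply_tmul]

theorem smul_B (i j : Fin N) (u v x z : Rp K N) :
    (u ⊗ₜ[K] v : SEnv K N) • (x ⊗ₜ z : BS K N i j) = (u * x) ⊗ₜ (v * z) := by
  change toBS K N i j (u ⊗ₜ v) * (x ⊗ₜ z) = _
  simp [toBS]

theorem smul_T (i j : Fin N) (u v x y z : Rp K N) :
    (u ⊗ₜ[K] v : SEnv K N) • (x ⊗ₜ (y ⊗ₜ z) : TS K N i j) = (u * x) ⊗ₜ (y ⊗ₜ (v * z)) := by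
  change toTS K N i j (u ⊗ₜ v) * (x ⊗ₜ (y ⊗ₜ z)) = _
  simp [toTS]

theorem B_span (i j : Fin N) {P : BS K N i j → Prop} (m : BS K N i j)
    (hP : ∀ x z : Rp K N, P (x ⊗ₜ z)) (ha : ∀ m n, P m → P n → P (m + n)) : P m := by
  induction m using TensorProduct.induction_on with
  | zero => simpa using hP 0 0
  | tmul x z => exact hP x z
  | add m n hm hn => exact ha m n hm hn

theorem T_span (i j : Fin N) {P : TS K N i j → Prop} (m : TS K N i j)
    (hP : ∀ x y z : Rp K N, P (x ⊗ₜ (y ⊗ₜ z))) (ha : ∀ m n, P m → P n → P (m + n)) : P m := by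
  induction m using TensorProduct.induction_on with
  | zero => simpa using hP 0 0 0
  | tmul x b =>
    refine B_span i j (P := fun b => P (x ⊗ₜ b)) b (fun y z => hP x y z) ?_
    intro m n hm hn
    rw [TensorProduct.tmul_add]
    exact ha _ _ hm hn
  | add m n hm hn => exact ha m n hm hn

/-- Build a bimodule map from an additive map commuting with pure tensors. -/
def mkS {M M' : Type} [AddCommGroup M] [AddCommGroup M'] [Module (SEnv K N) M]
    [Module (SEnv K N) M'] (f : M →+ M')
    (hf : ∀ (u v : Rp K N) (m : M), f ((u ⊗ₜ[K] v : SEnv K N) • m) = (u ⊗ₜ[K] v : SEnv K N) • f m) :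
    M →ₗ[SEnv K N] M' where
  toFun := f
  map_add' := f.map_add
  map_smul' s m := by
    rw [RingHom.id_apply]
    induction s using TensorProduct.induction_on with
    | zero =>
      have e1 : (0 : SEnv K N) • m = 0 := zero_smul (SEnv K N) m
      have e2 : (0 : SEnv K N) • f m = 0 := zero_smul (SEnv K N) (f m)
      exact (congrArg f e1).trans (f.map_zero.trans e2.symm)
    | tmul u v => exact hf u v m
    | add s t hs ht => rw [add_smul, add_smul, map_add, hs, ht]

theorem exists_phi (i j : Fin N) (h : i ≠ j) :
    ∃ φ : TS K N i j →ₗ[SEnv K N] BS K N i j,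
      ∀ x y z : Rp K N, φ (x ⊗ₜ (y ⊗ₜ z)) = x ⊗ₜ (dem i j h y * z) := by
  let D : BS K N i j →ₗ[swapInv K N i j] Rp K N :=
    TensorProduct.lift ((LinearMap.mul (swapInv K N i j) (Rp K N)).comp (dem i j h))
  let f : TS K N i j →ₗ[swapInv K N i j] BS K N i j := LinearMap.lTensor (Rp K N) D
  have hf : ∀ x y z : Rp K N, f (x ⊗ₜ (y ⊗ₜ z)) = x ⊗ₜ (dem i j h y * z) := by
    intro x y z
    rfl
  refine ⟨mkS f.toAddMonoidHom ?_, fun x y z => hf x y z⟩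
  intro u v m
  change f _ = _ • f m
  refine T_span i j (P := fun m => f ((u ⊗ₜ[K] v : SEnv K N) • m)
    = (u ⊗ₜ[K] v : SEnv K N) • f m) m ?_ ?_
  · intro x y z
    rw [smul_T, hf, hf, smul_B, mul_left_comm]
  · intro m n hm hn
    rw [smul_add, map_add, hm, hn, map_add, smul_add]

theorem exists_j (i j : Fin N) :
    ∃ φ : BS K N i j →ₗ[SEnv K N] TS K N i j,
      ∀ x z : Rp K N, φ (x ⊗ₜ z) = x ⊗ₜ (1 ⊗ₜ z) := by
  let f : BS K N i j →ₗ[swapInv K N i j] TS K N i j :=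
    LinearMap.lTensor (Rp K N) (TensorProduct.mk (swapInv K N i j) (Rp K N) (Rp K N) 1)
  have hf : ∀ x z : Rp K N, f (x ⊗ₜ z) = x ⊗ₜ (1 ⊗ₜ z) := by
    intro x z
    rfl
  refine ⟨mkS f.toAddMonoidHom ?_, fun x z => hf x z⟩
  intro u v m
  change f _ = _ • f m
  refine B_span i j (P := fun m => f ((u ⊗ₜ[K] v : SEnv K N) • m)
    = (u ⊗ₜ[K] v : SEnv K N) • f m) m ?_ ?_
  · intro x z
    rw [smul_B, hf, hf, smul_T]
  · intro m n hm hn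
    rw [smul_add, map_add, hm, hn, map_add, smul_add]

theorem R_ext {M : Type} [AddCommGroup M] [Module (SEnv K N) M]
    {f g : Rp K N →ₗ[SEnv K N] M} (h : f 1 = g 1) : f = g := by
  ext1 r
  have : r = (r ⊗ₜ[K] (1 : Rp K N) : SEnv K N) • (1 : Rp K N) := by rw [smul_R]; ring
  rw [this, map_smul, map_smul, h]

theorem B_ext {i j : Fin N} {M : Type} [AddCommGroup M] [Module (SEnv K N) M]
    {f g : BS K N i j →ₗ[SEnv K N] M} (h : f (1 ⊗ₜ 1) = g (1 ⊗ₜ 1)) : f = g := by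
  refine LinearMap.ext fun m => ?_
  refine B_span i j (P := fun m => f m = g m) m ?_ ?_
  · intro x z
    have : (x ⊗ₜ z : BS K N i j) = (x ⊗ₜ[K] z : SEnv K N) • (1 ⊗ₜ 1 : BS K N i j) := by
      rw [smul_B, mul_one, mul_one]
    rw [this, map_smul, map_smul, h]
  · intro m n hm hn
    rw [map_add, map_add, hm, hn]

theorem T_ext {i j : Fin N} (hij : i ≠ j) {M : Type} [AddCommGroup M] [Module (SEnv K N) M]
    {f g : TS K N i j →ₗ[SEnv K N] M} (h : f (1 ⊗ₜ (1 ⊗ₜ 1)) = g (1 ⊗ₜ (1 ⊗ₜ 1)))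
    (h' : f (1 ⊗ₜ (hlf K N i j ⊗ₜ 1)) = g (1 ⊗ₜ (hlf K N i j ⊗ₜ 1))) : f = g := by
  refine LinearMap.ext fun m => ?_
  refine T_span i j (P := fun m => f m = g m) m ?_ ?_
  · intro x y z
    obtain ⟨y₀, y₁, hy⟩ := exists_decomp i j hij y
    have key : ∀ (c : swapInv K N i j) (w : Rp K N),
        (x ⊗ₜ (((c : Rp K N) * w) ⊗ₜ z) : TS K N i j)
          = ((x * (c : Rp K N)) ⊗ₜ[K] z : SEnv K N) • (1 ⊗ₜ (w ⊗ₜ 1) : TS K N i j) := by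
      intro c w
      rw [smul_T, mul_one, mul_one]
      have e1 : (c : Rp K N) * w = c • w := by rw [Subalgebra.smul_def, smul_eq_mul]
      have e2 : x * (c : Rp K N) = c • x := by rw [Subalgebra.smul_def, smul_eq_mul, mul_comm]
      rw [e1, e2, ← TensorProduct.smul_tmul']
      exact (TensorProduct.smul_tmul c x (w ⊗ₜ z : BS K N i j)).symm
    rw [hy, TensorProduct.add_tmul, TensorProduct.tmul_add, key, key]
    simp only [map_add, map_smul, h, h']
  · intro m n hm hn
    rw [map_add, map_add, hm, hn]

end Helpers

/-- fix `1 ≤ i ≤ N-1` (below `i' = i+1`), and let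
`F_i = (B_i →d R)` (degrees 1, 0) and `F_i' = (R →d' B_i)` (degrees 0, -1) be
the Rouquier complexes of `R`-bimodules, where `d` is the multiplication map
`x ⊗ y ↦ xy` and `d'` is `f ↦ (1/2)·f·((x_i - x_{i'}) ⊗ 1 + 1 ⊗ (x_i - x_{i'}))`.
Then `F_i ⊗_R F_i'`, realized as the complex
`B_i --δ₁--> (B_i ⊗_R B_i) × R --δ₀--> B_i` in degrees 1, 0, -1, and
`F_i' ⊗_R F_i`, realized as `B_i --δ'₁--> (B_i ⊗_R B_i) × R --δ'₀--> B_i`,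
are both complexes (`δ₀ ∘ δ₁ = 0` and `δ'₀ ∘ δ'₁ = 0`) homotopy equivalent, as
complexes of `R`-bimodules, to the complex `R` concentrated in homological
degree `0`.  In particular `F_i` is invertible in the homotopy category of
complexes of `R`-bimodules, with inverse `F_i'`. -/
theorem rouquier_complexes_are_inverse_up_to_homotopy
    (K : Type) [Field K] [CharZero K] (N : ℕ) (i i' : Fin N)
    (hadj : i.val + 1 = i'.val)
    -- differentials of `F_i` and `F_i'`:
    (d : BS K N i i' →ₗ[SEnv K N] Rp K N)
    (hd : ∀ x y : Rp K N, d (x ⊗ₜ y) = x * y)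
    (d' : Rp K N →ₗ[SEnv K N] BS K N i i')
    (hd' : ∀ r : Rp K N, d' r = (r * hlf K N i i') ⊗ₜ 1 + r ⊗ₜ hlf K N i i')
    -- the differentials of `F_i ⊗_R F_i'`:
    (δ₁ : BS K N i i' →ₗ[SEnv K N] TS K N i i' × Rp K N)
    (hδ₁ : ∀ x y : Rp K N,
      δ₁ (x ⊗ₜ y) = (-(x ⊗ₜ ((y * hlf K N i i') ⊗ₜ 1 + y ⊗ₜ hlf K N i i')), x * y))
    (δ₀ : TS K N i i' × Rp K N →ₗ[SEnv K N] BS K N i i')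
    (hδ₀ : ∀ x y z r : Rp K N,
      δ₀ (x ⊗ₜ (y ⊗ₜ z), r) =
        (x * y) ⊗ₜ z + (r * hlf K N i i') ⊗ₜ 1 + r ⊗ₜ hlf K N i i')
    -- the differentials of `F_i' ⊗_R F_i`:
    (δ'₁ : BS K N i i' →ₗ[SEnv K N] TS K N i i' × Rp K N)
    (hδ'₁ : ∀ x y : Rp K N,
      δ'₁ (x ⊗ₜ y) =
        (hlf K N i i' ⊗ₜ (x ⊗ₜ y) + 1 ⊗ₜ ((hlf K N i i' * x) ⊗ₜ y), x * y))
    (δ'₀ : TS K N i i' × Rp K N →ₗ[SEnv K N] BS K N i i')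
    (hδ'₀ : ∀ x y z r : Rp K N,
      δ'₀ (x ⊗ₜ (y ⊗ₜ z), r) =
        -(x ⊗ₜ (y * z)) + (r * hlf K N i i') ⊗ₜ 1 + r ⊗ₜ hlf K N i i') :
    -- `F_i ⊗_R F_i'` is a complex, homotopy equivalent to `R` in degree `0`:
    (δ₀ ∘ₗ δ₁ = 0 ∧
      ∃ (p : TS K N i i' × Rp K N →ₗ[SEnv K N] Rp K N)
        (ι : Rp K N →ₗ[SEnv K N] TS K N i i' × Rp K N)
        (h₁ : TS K N i i' × Rp K N →ₗ[SEnv K N] BS K N i i')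
        (h₀ : BS K N i i' →ₗ[SEnv K N] TS K N i i' × Rp K N),
        p ∘ₗ δ₁ = 0 ∧ δ₀ ∘ₗ ι = 0 ∧
        p ∘ₗ ι = LinearMap.id ∧
        h₁ ∘ₗ δ₁ = LinearMap.id ∧
        ι ∘ₗ p + δ₁ ∘ₗ h₁ + h₀ ∘ₗ δ₀ = LinearMap.id ∧
        δ₀ ∘ₗ h₀ = LinearMap.id) ∧
    -- `F_i' ⊗_R F_i` is a complex, homotopy equivalent to `R` in degree `0`:
    (δ'₀ ∘ₗ δ'₁ = 0 ∧
      ∃ (p : TS K N i i' × Rp K N →ₗ[SEnv K N] Rp K N)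
        (ι : Rp K N →ₗ[SEnv K N] TS K N i i' × Rp K N)
        (h₁ : TS K N i i' × Rp K N →ₗ[SEnv K N] BS K N i i')
        (h₀ : BS K N i i' →ₗ[SEnv K N] TS K N i i' × Rp K N),
        p ∘ₗ δ'₁ = 0 ∧ δ'₀ ∘ₗ ι = 0 ∧
        p ∘ₗ ι = LinearMap.id ∧
        h₁ ∘ₗ δ'₁ = LinearMap.id ∧
        ι ∘ₗ p + δ'₁ ∘ₗ h₁ + h₀ ∘ₗ δ'₀ = LinearMap.id ∧
        δ'₀ ∘ₗ h₀ = LinearMap.id) := by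
  have hij : i ≠ i' := by
    intro e
    rw [e] at hadj
    omega
  obtain ⟨φ, hφ⟩ := exists_phi (K := K) i i' hij
  obtain ⟨ψ, hψ⟩ := exists_j (K := K) i i'
  have h1 := dem_one (K := K) i i' hij
  have h2 := dem_hlf (K := K) i i' hij
  have φ1 : φ (1 ⊗ₜ (1 ⊗ₜ 1)) = 0 := by
    rw [hφ, h1, zero_mul, TensorProduct.tmul_zero]
  have φa : φ (1 ⊗ₜ (hlf K N i i' ⊗ₜ 1)) = 1 ⊗ₜ 1 := by
    rw [hφ, h2, one_mul]
  have φ1a : φ (1 ⊗ₜ (1 ⊗ₜ hlf K N i i')) = 0 := by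
    rw [hφ, h1, zero_mul, TensorProduct.tmul_zero]
  have φa1 : φ (hlf K N i i' ⊗ₜ (1 ⊗ₜ 1)) = 0 := by
    rw [hφ, h1, zero_mul, TensorProduct.tmul_zero]
  have d1 : d (1 ⊗ₜ 1) = 1 := by rw [hd, one_mul]
  have d'1 : d' 1 = hlf K N i i' ⊗ₜ 1 + 1 ⊗ₜ hlf K N i i' := by rw [hd', one_mul]
  have ψ1 := hψ 1 1
  have ψa := hψ (hlf K N i i') 1
  have ψb := hψ 1 (hlf K N i i')
  have a1 : δ₁ (1 ⊗ₜ 1) = (-(1 ⊗ₜ (hlf K N i i' ⊗ₜ 1) + 1 ⊗ₜ (1 ⊗ₜ hlf K N i i')), 1) := by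
    rw [hδ₁, one_mul, one_mul, TensorProduct.tmul_add]
  have z0 : (0 : TS K N i i') = 0 ⊗ₜ (0 ⊗ₜ 0) := by rw [TensorProduct.zero_tmul]
  have a0 : ∀ x y z : Rp K N, δ₀ (x ⊗ₜ (y ⊗ₜ z), 0) = (x * y) ⊗ₜ z := by
    intro x y z
    rw [hδ₀, zero_mul, TensorProduct.zero_tmul, TensorProduct.zero_tmul, add_zero, add_zero]
  have a0r : δ₀ (0, 1) = hlf K N i i' ⊗ₜ 1 + 1 ⊗ₜ hlf K N i i' := by
    rw [z0, hδ₀, zero_mul, TensorProduct.zero_tmul, zero_add, one_mul]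
  have b1 : δ'₁ (1 ⊗ₜ 1) = (hlf K N i i' ⊗ₜ (1 ⊗ₜ 1) + 1 ⊗ₜ (hlf K N i i' ⊗ₜ 1), 1) := by
    rw [hδ'₁, one_mul, mul_one]
  have b0 : ∀ x y z : Rp K N, δ'₀ (x ⊗ₜ (y ⊗ₜ z), 0) = -(x ⊗ₜ (y * z)) := by
    intro x y z
    rw [hδ'₀, zero_mul, TensorProduct.zero_tmul, TensorProduct.zero_tmul, add_zero, add_zero]
  have b0r : δ'₀ (0, 1) = hlf K N i i' ⊗ₜ 1 + 1 ⊗ₜ hlf K N i i' := by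
    rw [z0, hδ'₀, zero_mul, TensorProduct.zero_tmul, neg_zero, zero_add, one_mul]
  obtain ⟨μ, hμ⟩ : ∃ μ : TS K N i i' →ₗ[SEnv K N] BS K N i i',
    μ = δ₀ ∘ₗ LinearMap.inl (SEnv K N) _ _ := ⟨_, rfl⟩
  obtain ⟨ν, hν⟩ : ∃ ν : TS K N i i' →ₗ[SEnv K N] BS K N i i',
    ν = δ'₀ ∘ₗ LinearMap.inl (SEnv K N) _ _ := ⟨_, rfl⟩
  have eμ : ∀ x y z : Rp K N, μ (x ⊗ₜ (y ⊗ₜ z)) = (x * y) ⊗ₜ z := by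
    intro x y z
    rw [hμ]
    exact a0 x y z
  have eν : ∀ x y z : Rp K N, ν (x ⊗ₜ (y ⊗ₜ z)) = -(x ⊗ₜ (y * z)) := by
    intro x y z
    rw [hν]
    exact b0 x y z
  have e0 : δ₀ = μ.coprod d' := by
    apply LinearMap.prod_ext
    · rw [hμ, LinearMap.coprod_inl]
    · rw [LinearMap.coprod_inr]
      exact R_ext (a0r.trans d'1.symm)
  have e0' : δ'₀ = ν.coprod d' := by
    apply LinearMap.prod_ext
    · rw [hν, LinearMap.coprod_inl]
    · rw [LinearMap.coprod_inr]
      exact R_ext (b0r.trans d'1.symm)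
  subst e0 e0'
  clear hδ₁ hδ₀ hδ'₁ hδ'₀ hμ hν a0 a0r b0 b0r z0 h1 h2 hφ hψ hd hd'
  have m1 := eμ 1 1 1
  have m2 := eμ 1 (hlf K N i i') 1
  have m3 := eμ 1 1 (hlf K N i i')
  have m4 := eμ (hlf K N i i') 1 1
  have n1 := eν 1 1 1
  have n2 := eν 1 (hlf K N i i') 1
  have n3 := eν 1 1 (hlf K N i i')
  have n4 := eν (hlf K N i i') 1 1
  simp only [one_mul, mul_one] at m1 m2 m3 m4 n1 n2 n3 n4
  refine ⟨⟨?_, (d ∘ₗ φ).coprod LinearMap.id, (-(ψ ∘ₗ d')).prod LinearMap.id,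
      (-φ) ∘ₗ LinearMap.fst _ _ _, ψ.prod 0, ?_, ?_, ?_, ?_, ?_, ?_⟩,
    ⟨?_, (-(d ∘ₗ φ)).coprod LinearMap.id, (ψ ∘ₗ d').prod LinearMap.id,
      φ ∘ₗ LinearMap.fst _ _ _, (-ψ).prod 0, ?_, ?_, ?_, ?_, ?_, ?_⟩⟩
  · apply B_ext
    simp [a1, m1, m2, m3, d'1]
  · apply B_ext
    simp [a1, φ1, φa, φ1a, d1]
  · apply R_ext
    simp [d'1, ψa, ψb, m3, m4]
  · apply R_ext
    simp [d'1, ψa, ψb, φ1a, φa1]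
  · apply B_ext
    simp [a1, φ1, φa, φ1a, d1]
  · apply LinearMap.prod_ext
    · apply T_ext hij
      · simp [φ1, m1, ψ1]
      · simp [φa, d1, d'1, ψa, ψb, a1, m2]
        abel
    · apply R_ext
      simp [d'1, ψa, ψb]
  · apply B_ext
    simp [ψ1, m1]
  · apply B_ext
    simp [b1, n2, n4, d'1]
    abel
  · apply B_ext
    simp [b1, φa, φa1, d1]
  · apply R_ext
    simp [d'1, ψa, ψb, n3, n4]
    abel
  · apply R_ext
    simp [d'1, ψa, ψb, φ1a, φa1]
  · apply B_ext
    simp [b1, φa, φa1, d1]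
  · apply LinearMap.prod_ext
    · apply T_ext hij
      · simp [φ1, n1, ψ1]
      · simp [φa, d1, d'1, ψa, ψb, b1, n2]
    · apply R_ext
      simp [d'1, ψa, ψb]
  · apply B_ext
    simp [ψ1, n1]
end

section
/- Let K be a field of characteristic 0, R a commutative K-algebra, and let M and N be R-bimodules (modules over R ⊗_K R) such that M is finitely generated projective both as a left R-module and as a right R-module, and N is finitely generated projective both as a left R-module and as a right R-module. Then for every n ≥ 0 there is an isomorphism of Hochschild homology groups HH_n(R, M ⊗_R N) ≅ HH_n(R, N ⊗_R M), where HH_n(R, −) = Tor_n^{R ⊗_K R}(R, −). This trace property is the algebraic source of the conjugation invariance of the triply-graded link homology. -/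
set_option synthInstance.maxHeartbeats 1000000
set_option maxHeartbeats 1000000

/-!
STATEMENT 15: the trace property of Hochschild homology
`HH_n(R, M ⊗_R N) ≅ HH_n(R, N ⊗_R M)`, where `HH_n(R, -) = Tor_n^{R ⊗_K R}(R, -)`,
for `R`-bimodules `M`, `N` (i.e. modules over `R ⊗_K R`) that are finitely
generated projective as left and as right `R`-modules.  The bimodule tensor
products `M ⊗_R N` and `N ⊗_R M` are encoded by their universal property.
-/

open TensorProduct CategoryTheory

universe u

noncomputable section
namespace HHTrace

section Bimod
variable {K A B C : Type u} [Field K] [CommRing A] [Algebra K A] [CommRing B] [Algebra K B]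
  [CommRing C] [Algebra K C]

@[reducible] def modL (X : ModuleCat.{u} (A ⊗[K] B)) : Module A X :=
  Module.compHom X (algebraMap A (A ⊗[K] B))

@[reducible] def modR (X : ModuleCat.{u} (A ⊗[K] B)) : Module B X :=
  Module.compHom X (Algebra.TensorProduct.includeRight (R := K) (A := A) (B := B)).toRingHom

@[reducible] def modK (X : ModuleCat.{u} (A ⊗[K] B)) : Module K X :=
  Module.compHom X (algebraMap K (A ⊗[K] B))

attribute [local instance] modL modR modK

lemma smulL_def (X : ModuleCat.{u} (A ⊗[K] B)) (a : A) (x : X) : a • x = (a ⊗ₜ[K] (1 : B)) • x := rfl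
lemma smulR_def (X : ModuleCat.{u} (A ⊗[K] B)) (b : B) (x : X) : b • x = ((1 : A) ⊗ₜ[K] b) • x := rfl
lemma smulK_def (X : ModuleCat.{u} (A ⊗[K] B)) (k : K) (x : X) :
    k • x = (algebraMap K (A ⊗[K] B) k) • x := rfl

instance towerL (X : ModuleCat.{u} (A ⊗[K] B)) : IsScalarTower K A X where
  smul_assoc k a x := by
    rw [smulL_def, smulL_def, smulK_def, smul_smul]
    congr 1
    rw [← Algebra.smul_def, TensorProduct.smul_tmul']

instance towerR (X : ModuleCat.{u} (A ⊗[K] B)) : IsScalarTower K B X where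
  smul_assoc k a x := by
    rw [smulR_def, smulR_def, smulK_def, smul_smul]
    congr 1
    rw [← Algebra.smul_def, TensorProduct.tmul_smul]

instance commLR (X : ModuleCat.{u} (A ⊗[K] B)) : SMulCommClass A B X where
  smul_comm a b x := by
    rw [smulL_def, smulL_def, smulR_def, smulR_def, smul_smul, smul_smul, mul_comm]

instance commRL (X : ModuleCat.{u} (A ⊗[K] B)) : SMulCommClass B A X := SMulCommClass.symm _ _ _

instance commKL (X : ModuleCat.{u} (A ⊗[K] B)) : SMulCommClass K A X where
  smul_comm a b x := by
    rw [smulL_def, smulL_def, smulK_def, smulK_def, smul_smul, smul_smul, mul_comm]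
instance commKR (X : ModuleCat.{u} (A ⊗[K] B)) : SMulCommClass K B X where
  smul_comm a b x := by
    rw [smulR_def, smulR_def, smulK_def, smulK_def, smul_smul, smul_smul, mul_comm]
instance commLK (X : ModuleCat.{u} (A ⊗[K] B)) : SMulCommClass A K X := SMulCommClass.symm _ _ _
instance commRK (X : ModuleCat.{u} (A ⊗[K] B)) : SMulCommClass B K X := SMulCommClass.symm _ _ _

lemma smul_tmul_eq (X : ModuleCat.{u} (A ⊗[K] B)) (a : A) (b : B) (x : X) :
    (a ⊗ₜ[K] b) • x = a • b • x := by
  rw [smulL_def, smulR_def, smul_smul]; simp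

/-- An additive map compatible with both actions is linear over the enveloping ring. -/
def mkLin {X Y : Type u} [AddCommGroup X] [AddCommGroup Y] [Module (A ⊗[K] B) X]
    [Module (A ⊗[K] B) Y] (f : X →+ Y)
    (hl : ∀ (a : A) x, f ((a ⊗ₜ[K] (1 : B)) • x) = (a ⊗ₜ[K] (1 : B)) • f x)
    (hr : ∀ (b : B) x, f (((1 : A) ⊗ₜ[K] b) • x) = ((1 : A) ⊗ₜ[K] b) • f x) :
    X →ₗ[A ⊗[K] B] Y where
  toFun := f
  map_add' := f.map_add
  map_smul' s x := by
    simp only [RingHom.id_apply]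
    induction s using TensorProduct.induction_on with
    | zero => simp
    | add s t hs ht => rw [add_smul, add_smul, map_add, hs, ht]
    | tmul a b =>
      have : (a ⊗ₜ[K] b) = (a ⊗ₜ[K] (1 : B)) * ((1 : A) ⊗ₜ[K] b) := by simp
      rw [this, mul_smul, hl, hr, mul_smul]

@[simp] lemma mkLin_apply {X Y : Type u} [AddCommGroup X] [AddCommGroup Y] [Module (A ⊗[K] B) X]
    [Module (A ⊗[K] B) Y] (f : X →+ Y) (hl) (hr) (x : X) :
    mkLin (K := K) (A := A) (B := B) f hl hr x = f x := rfl

/-- Underlying type of the tensor product of bimodules. -/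
def TT (X : ModuleCat.{u} (A ⊗[K] B)) (N : ModuleCat.{u} (B ⊗[K] C)) : Type u := X ⊗[B] N

variable (X : ModuleCat.{u} (A ⊗[K] B)) (N : ModuleCat.{u} (B ⊗[K] C))

instance : AddCommGroup (TT X N) := inferInstanceAs (AddCommGroup (X ⊗[B] N))
@[reducible] def ttB : Module B (TT X N) := inferInstanceAs (Module B (X ⊗[B] N))
@[reducible] def ttA : Module A (TT X N) := inferInstanceAs (Module A (X ⊗[B] N))
@[reducible] def ttK : Module K (TT X N) := inferInstanceAs (Module K (X ⊗[B] N))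
/-- right action -/
@[reducible] def ttC : Module C (TT X N) :=
  Module.compHom (X ⊗[B] N) ((Module.End.lTensorAlgHom B N X).toRingHom.comp
    (Module.toModuleEnd B (S := C) N))
attribute [local instance] ttB ttA ttK ttC

def tm {X : ModuleCat.{u} (A ⊗[K] B)} {N : ModuleCat.{u} (B ⊗[K] C)} (x : X) (n : N) : TT X N :=
  x ⊗ₜ[B] n

variable {X N}
lemma tt_ind {p : TT X N → Prop} (h0 : p 0) (ht : ∀ x n, p (tm x n))
    (ha : ∀ s t, p s → p t → p (s + t)) (t : TT X N) : p t :=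
  TensorProduct.induction_on (motive := p) t h0 ht ha

lemma ttA_tm (a : A) (x : X) (n : N) : a • tm x n = tm (a • x) n := rfl
lemma ttK_tm (a : K) (x : X) (n : N) : a • tm x n = tm (a • x) n := rfl
lemma ttC_tm (c : C) (x : X) (n : N) : c • tm x n = tm x (c • n) := rfl
lemma tm_bal (b : B) (x : X) (n : N) : tm (b • x) n = tm x (b • n) :=
  TensorProduct.smul_tmul b x n
lemma tm_addl (x x' : X) (n : N) : tm (x + x') n = tm x n + tm x' n := TensorProduct.add_tmul _ _ _
lemma tm_addr (x : X) (n n' : N) : tm x (n + n') = tm x n + tm x n' := TensorProduct.tmul_add _ _ _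

instance : IsScalarTower K A (TT X N) := inferInstanceAs (IsScalarTower K A (X ⊗[B] N))
instance : IsScalarTower K C (TT X N) where
  smul_assoc k c t := by
    induction t using tt_ind with
    | h0 => simp
    | ha s t hs ht => simp only [smul_add, hs, ht]
    | ht x n =>
      rw [ttC_tm, ttC_tm, ttK_tm, smul_assoc]
      rw [← algebraMap_smul B k x, tm_bal, algebraMap_smul]
instance : SMulCommClass A C (TT X N) where
  smul_comm a c t := by
    induction t using tt_ind with
    | h0 => simp
    | ha s t hs ht => simp only [smul_add, hs, ht]
    | ht x n => rw [ttC_tm, ttA_tm, ttA_tm, ttC_tm]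

instance ttMod : Module (A ⊗[K] C) (TT X N) := TensorProduct.Algebra.module

lemma tt_smul (a : A) (c : C) (t : TT X N) : (a ⊗ₜ[K] c) • t = a • c • t := rfl

lemma tt_smul_tm (a : A) (c : C) (x : X) (n : N) :
    (a ⊗ₜ[K] c) • tm x n = tm (a • x) (c • n) := rfl

/-- lift a balanced biadditive map -/
def ttLift {Q : Type u} [AddCommGroup Q] (f : X →+ N →+ Q)
    (hf : ∀ (b : B) x n, f (b • x) n = f x (b • n)) : TT X N →+ Q :=
  TensorProduct.liftAddHom f hf

lemma ttLift_tm {Q : Type u} [AddCommGroup Q] (f : X →+ N →+ Q)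
    (hf : ∀ (b : B) x n, f (b • x) n = f x (b • n)) (x : X) (n : N) :
    ttLift f hf (tm x n) = f x n := rfl

lemma tt_ext {Q : Type u} [AddCommGroup Q] {f g : TT X N →+ Q}
    (h : ∀ x n, f (tm x n) = g (tm x n)) : f = g := by
  ext t
  induction t using tt_ind with
  | h0 => simp
  | ha s t hs ht => simp only [map_add, hs, ht]
  | ht x n => exact h x n

variable (X N)
abbrev TTc : ModuleCat.{u} (A ⊗[K] C) := ModuleCat.of _ (TT X N)
variable {X N}

lemma lin_smulL {Y Z : ModuleCat.{u} (A ⊗[K] B)} (f : Y →ₗ[A ⊗[K] B] Z) (a : A) (x : Y) :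
    f (a • x) = a • f x := f.map_smul (a ⊗ₜ 1) x
lemma lin_smulR {Y Z : ModuleCat.{u} (A ⊗[K] B)} (f : Y →ₗ[A ⊗[K] B] Z) (b : B) (x : Y) :
    f (b • x) = b • f x := f.map_smul (1 ⊗ₜ b) x

/-- underlying right linear map -/
def linR {Y Z : ModuleCat.{u} (A ⊗[K] B)} (f : Y →ₗ[A ⊗[K] B] Z) : Y →ₗ[B] Z :=
  { toFun := f, map_add' := f.map_add, map_smul' := fun b x => lin_smulR f b x }
def linL {Y Z : ModuleCat.{u} (A ⊗[K] B)} (f : Y →ₗ[A ⊗[K] B] Z) : Y →ₗ[A] Z :=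
  { toFun := f, map_add' := f.map_add, map_smul' := fun b x => lin_smulL f b x }

def mapL0 {Y Z : ModuleCat.{u} (A ⊗[K] B)} (N : ModuleCat.{u} (B ⊗[K] C)) (f : Y →ₗ[A ⊗[K] B] Z) :
    TT Y N →+ TT Z N := ((linR f).rTensor N).toAddMonoidHom

def mapR0 (X : ModuleCat.{u} (A ⊗[K] B)) {Y Z : ModuleCat.{u} (B ⊗[K] C)} (f : Y →ₗ[B ⊗[K] C] Z) :
    TT X Y →+ TT X Z := ((linL f).lTensor X).toAddMonoidHom

def mapL {Y Z : ModuleCat.{u} (A ⊗[K] B)} (N : ModuleCat.{u} (B ⊗[K] C)) (f : Y →ₗ[A ⊗[K] B] Z) :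
    TT Y N →ₗ[A ⊗[K] C] TT Z N :=
  mkLin (K := K) (A := A) (B := C) (mapL0 N f)
    (by
      intro a t
      induction t using tt_ind with
      | h0 => rw [smul_zero, map_zero, smul_zero]
      | ha s t hs ht => rw [smul_add, map_add, hs, ht, map_add, smul_add]
      | ht x n =>
        change tm (f (a • x)) ((1 : C) • n) = tm (a • f x) ((1 : C) • n)
        rw [lin_smulL])
    (by
      intro a t
      induction t using tt_ind with
      | h0 => rw [smul_zero, map_zero, smul_zero]
      | ha s t hs ht => rw [smul_add, map_add, hs, ht, map_add, smul_add]
      | ht x n =>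
        change tm (f ((1 : A) • x)) (a • n) = tm ((1 : A) • f x) (a • n)
        rw [one_smul, one_smul])

lemma mapL_tm {Y Z : ModuleCat.{u} (A ⊗[K] B)} (f : Y →ₗ[A ⊗[K] B] Z) (y : Y) (n : N) :
    mapL N f (tm y n) = tm (f y) n := rfl

def mapR (X : ModuleCat.{u} (A ⊗[K] B)) {Y Z : ModuleCat.{u} (B ⊗[K] C)} (f : Y →ₗ[B ⊗[K] C] Z) :
    TT X Y →ₗ[A ⊗[K] C] TT X Z :=
  mkLin (K := K) (A := A) (B := C) (mapR0 X f)
    (by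
      intro a t
      induction t using tt_ind with
      | h0 => rw [smul_zero, map_zero, smul_zero]
      | ha s t hs ht => rw [smul_add, map_add, hs, ht, map_add, smul_add]
      | ht x n =>
        change tm (a • x) (f ((1 : C) • n)) = tm (a • x) ((1 : C) • f n)
        rw [one_smul, one_smul])
    (by
      intro a t
      induction t using tt_ind with
      | h0 => rw [smul_zero, map_zero, smul_zero]
      | ha s t hs ht => rw [smul_add, map_add, hs, ht, map_add, smul_add]
      | ht x n =>
        change tm ((1 : A) • x) (f (a • n)) = tm ((1 : A) • x) (a • f n)
        rw [lin_smulR])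

lemma mapR_tm {Y Z : ModuleCat.{u} (B ⊗[K] C)} (f : Y →ₗ[B ⊗[K] C] Z) (x : X) (n : Y) :
    mapR X f (tm x n) = tm x (f n) := rfl

lemma ttlin_ext {Q : Type u} [AddCommGroup Q] [Module (A ⊗[K] C) Q] {f g : TT X N →ₗ[A ⊗[K] C] Q}
    (h : ∀ x n, f (tm x n) = g (tm x n)) : f = g := by
  have := tt_ext (f := f.toAddMonoidHom) (g := g.toAddMonoidHom) h
  ext t
  exact DFunLike.congr_fun this t

/-- `X ↦ X ⊗ N` -/
def funL (N : ModuleCat.{u} (B ⊗[K] C)) : ModuleCat.{u} (A ⊗[K] B) ⥤ ModuleCat.{u} (A ⊗[K] C) where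
  obj X := TTc X N
  map f := ModuleCat.ofHom (mapL N f.hom)
  map_id X := by
    ext1
    exact ttlin_ext fun x n => rfl
  map_comp f g := by
    ext1
    exact ttlin_ext fun x n => rfl

/-- `Y ↦ X ⊗ Y` -/
def funR (X : ModuleCat.{u} (A ⊗[K] B)) : ModuleCat.{u} (B ⊗[K] C) ⥤ ModuleCat.{u} (A ⊗[K] C) where
  obj Y := TTc X Y
  map f := ModuleCat.ofHom (mapR X f.hom)
  map_id X := by
    ext1
    exact ttlin_ext fun x n => rfl
  map_comp f g := by
    ext1
    exact ttlin_ext fun x n => rfl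

instance funL_add (N : ModuleCat.{u} (B ⊗[K] C)) : (funL (A := A) N).Additive where
  map_add {Y Z f g} := by
    ext1
    exact ttlin_ext fun x n => tm_addl _ _ _

instance funR_add (X : ModuleCat.{u} (A ⊗[K] B)) : (funR (C := C) X).Additive where
  map_add {Y Z f g} := by
    ext1
    exact ttlin_ext fun x n => tm_addr _ _ _

lemma funL_exact (N : ModuleCat.{u} (B ⊗[K] C)) [Module.Flat B N] :
    (funL (A := A) N).PreservesHomology := by
  have h : ∀ S : ShortComplex (ModuleCat.{u} (A ⊗[K] B)), S.Exact → (S.map (funL N)).Exact := by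
    intro S hS
    rw [ShortComplex.ShortExact.moduleCat_exact_iff_function_exact] at hS ⊢
    exact Module.Flat.rTensor_exact N (f := linR S.f.hom) (g := linR S.g.hom) hS
  exact ((Functor.exact_tfae (funL (A := A) N)).out 1 2).mp h

lemma funR_exact (X : ModuleCat.{u} (A ⊗[K] B)) [Module.Flat B X] :
    (funR (C := C) X).PreservesHomology := by
  have h : ∀ S : ShortComplex (ModuleCat.{u} (B ⊗[K] C)), S.Exact → (S.map (funR X)).Exact := by
    intro S hS
    rw [ShortComplex.ShortExact.moduleCat_exact_iff_function_exact] at hS ⊢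
    exact Module.Flat.lTensor_exact X (f := linL S.f.hom) (g := linL S.g.hom) hS
  exact ((Functor.exact_tfae (funR (C := C) X)).out 1 2).mp h

section HomR
/-- Right linear maps `N → Y`. -/
def HomR (N : ModuleCat.{u} (B ⊗[K] C)) (Y : ModuleCat.{u} (A ⊗[K] C)) : Type u := N →ₗ[C] Y

variable (N : ModuleCat.{u} (B ⊗[K] C)) (Y : ModuleCat.{u} (A ⊗[K] C))

instance : AddCommGroup (HomR N Y) := inferInstanceAs (AddCommGroup (N →ₗ[C] Y))
@[reducible] def homRA : Module A (HomR N Y) := inferInstanceAs (Module A (N →ₗ[C] Y))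
@[reducible] def homRK : Module K (HomR N Y) := inferInstanceAs (Module K (N →ₗ[C] Y))
instance : FunLike (HomR N Y) N Y := inferInstanceAs (FunLike (N →ₗ[C] Y) N Y)
variable {N Y}
@[ext] lemma homR_ext {f g : HomR N Y} (h : ∀ n, f n = g n) : f = g := LinearMap.ext h
lemma homR_add (f g : HomR N Y) (n : N) : (f + g) n = f n + g n := rfl
lemma homR_map_add (f : HomR N Y) (n m : N) : f (n + m) = f n + f m := LinearMap.map_add _ _ _
lemma homR_map_zero (f : HomR N Y) : f 0 = 0 := LinearMap.map_zero _
lemma homR_zero (n : N) : (0 : HomR N Y) n = 0 := rfl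
lemma homR_map_smul (f : HomR N Y) (c : C) (n : N) : f (c • n) = c • f n := LinearMap.map_smul _ _ _
attribute [local instance] homRA homRK
variable (N Y)
@[reducible] def homRB : Module B (HomR N Y) where
  smul b f := LinearMap.comp (show N →ₗ[C] Y from f) (Module.toModuleEnd C (S := B) N b)
  one_smul f := by ext n; change f ((1 : B) • n) = f n; rw [one_smul]
  mul_smul b b' f := by
    ext n; change f ((b * b') • n) = f (b' • b • n); rw [mul_comm, mul_smul]
  smul_zero b := rfl
  smul_add b f g := rfl
  add_smul b b' f := by
    ext n; change f ((b + b') • n) = f (b • n) + f (b' • n); rw [add_smul, homR_map_add]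
  zero_smul f := by
    ext n; change f ((0 : B) • n) = 0; rw [zero_smul, homR_map_zero]
attribute [local instance] homRB
variable {N Y}
lemma homRA_apply (a : A) (f : HomR N Y) (n : N) : (a • f) n = a • f n := rfl
lemma homRK_apply (a : K) (f : HomR N Y) (n : N) : (a • f) n = a • f n := rfl
lemma homRB_apply (b : B) (f : HomR N Y) (n : N) : (b • f) n = f (b • n) := rfl

instance : IsScalarTower K A (HomR N Y) where
  smul_assoc k a f := by ext n; simp only [homRA_apply, homRK_apply, smul_assoc]
instance : IsScalarTower K B (HomR N Y) where
  smul_assoc k b f := by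
    ext n
    rw [homRB_apply, homRK_apply, homRB_apply, smul_assoc, ← algebraMap_smul C k (b • n),
      homR_map_smul, algebraMap_smul]
instance : SMulCommClass A B (HomR N Y) where
  smul_comm _ _ _ := rfl
instance homRMod : Module (A ⊗[K] B) (HomR N Y) := TensorProduct.Algebra.module

variable (N) in
abbrev HomRc (Y : ModuleCat.{u} (A ⊗[K] C)) : ModuleCat.{u} (A ⊗[K] B) := ModuleCat.of _ (HomR N Y)

lemma homR_smulL (a : A) (f : HomR N Y) (n : N) : ((a ⊗ₜ[K] (1 : B)) • f) n = a • f n := by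
  change a • f ((1 : B) • n) = _
  rw [one_smul]
lemma homR_smulR (b : B) (f : HomR N Y) (n : N) : (((1 : A) ⊗ₜ[K] b) • f) n = f (b • n) := by
  change (1 : A) • f (b • n) = _
  rw [one_smul]

variable (N) in
/-- postcomposition -/
def homRpost {Y Z : ModuleCat.{u} (A ⊗[K] C)} (g : Y →ₗ[A ⊗[K] C] Z) :
    HomR N Y →ₗ[A ⊗[K] B] HomR N Z :=
  mkLin (K := K) (A := A) (B := B)
    { toFun := fun f => (linR g).comp (show N →ₗ[C] Y from f)
      map_zero' := by ext n; exact g.map_zero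
      map_add' := fun f f' => by ext n; exact g.map_add _ _ }
    (fun a f => by
      ext n
      change g (((a ⊗ₜ[K] (1 : B)) • f) n) = _
      rw [homR_smulL, homR_smulL]
      exact lin_smulL g a _)
    (fun a f => by
      ext n
      change g ((((1 : A) ⊗ₜ[K] a) • f) n) = _
      rw [homR_smulR, homR_smulR]
      rfl)

lemma homRpost_apply {Y Z : ModuleCat.{u} (A ⊗[K] C)} (g : Y →ₗ[A ⊗[K] C] Z) (f : HomR N Y) (n : N) :
  homRpost N (B := B) g f n = g (f n) := rfl

lemma homRpost_surj {Y Z : ModuleCat.{u} (A ⊗[K] C)} [Module.Projective C N]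
    (g : Y →ₗ[A ⊗[K] C] Z) (hg : Function.Surjective g) :
    Function.Surjective (homRpost N (B := B) g) := by
  intro f
  obtain ⟨h, hh⟩ := Module.projective_lifting_property (linR g) (show N →ₗ[C] Z from f) hg
  exact ⟨h, hh⟩

/-- currying -/
def curryR (f : TT X N →ₗ[A ⊗[K] C] Y) : X →ₗ[A ⊗[K] B] HomR N Y :=
  mkLin (K := K) (A := A) (B := B)
    { toFun := fun x => (show N →ₗ[C] Y from
        { toFun := fun n => f (tm x n)
          map_add' := fun n n' => by rw [tm_addr, map_add]
          map_smul' := fun c n => by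
            rw [RingHom.id_apply, smulR_def Y, ← f.map_smul, tt_smul_tm, one_smul] })
      map_zero' := by
        ext n
        change f (tm 0 n) = 0
        rw [show (tm 0 n : TT X N) = 0 from TensorProduct.zero_tmul _ _, map_zero]
      map_add' := fun x x' => by
        ext n
        change f (tm _ n) = f (tm x n) + f (tm x' n)
        rw [tm_addl, map_add] }
    (fun a x => by
      ext n
      rw [homR_smulL, smulL_def Y]
      change f (tm (a • x) n) = (a ⊗ₜ[K] (1 : C)) • f (tm x n)
      rw [← f.map_smul, tt_smul_tm, one_smul])
    (fun b x => by
      ext n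
      rw [homR_smulR]
      change f (tm (b • x) n) = f (tm x (b • n))
      rw [tm_bal])

lemma curryR_apply (f : TT X N →ₗ[A ⊗[K] C] Y) (x : X) (n : N) : curryR f x n = f (tm x n) := rfl

def uncurryR0 (f : X →ₗ[A ⊗[K] B] HomR N Y) : TT X N →+ Y :=
  ttLift
    { toFun := fun x => (show N →ₗ[C] Y from f x).toAddMonoidHom
      map_zero' := by rw [map_zero]; rfl
      map_add' := fun x x' => by rw [map_add]; rfl }
    (fun b x n => by
      change f (((1 : A) ⊗ₜ[K] b) • x) n = f x (b • n)
      rw [f.map_smul, homR_smulR])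

lemma uncurryR0_tm (f : X →ₗ[A ⊗[K] B] HomR N Y) (x : X) (n : N) :
    uncurryR0 f (tm x n) = f x n := rfl

def uncurryR (f : X →ₗ[A ⊗[K] B] HomR N Y) : TT X N →ₗ[A ⊗[K] C] Y :=
  mkLin (K := K) (A := A) (B := C) (uncurryR0 f)
    (fun a t => by
      induction t using tt_ind with
      | h0 => rw [smul_zero, map_zero, smul_zero]
      | ha s t hs ht => rw [smul_add, map_add, hs, ht, map_add, smul_add]
      | ht x n =>
        rw [tt_smul_tm, uncurryR0_tm, uncurryR0_tm, one_smul, smulL_def X, f.map_smul, homR_smulL,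
          smulL_def Y])
    (fun a t => by
      induction t using tt_ind with
      | h0 => rw [smul_zero, map_zero, smul_zero]
      | ha s t hs ht => rw [smul_add, map_add, hs, ht, map_add, smul_add]
      | ht x n =>
        rw [tt_smul_tm, uncurryR0_tm, uncurryR0_tm, one_smul, homR_map_smul, smulR_def Y])

lemma uncurryR_tm (f : X →ₗ[A ⊗[K] B] HomR N Y) (x : X) (n : N) :
    uncurryR f (tm x n) = f x n := rfl

lemma funL_proj (N : ModuleCat.{u} (B ⊗[K] C)) [Module.Projective C N] :
    (funL (A := A) N).PreservesProjectiveObjects where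
  projective_obj {X} hX := by
    refine ⟨fun {Z Y} f e he => ?_⟩
    have hs := homRpost_surj (N := N) (B := B) e.hom ((ModuleCat.epi_iff_surjective e).mp he)
    have : Epi (ModuleCat.ofHom (homRpost (B := B) N e.hom) : HomRc N Z ⟶ HomRc N Y) :=
      (ModuleCat.epi_iff_surjective _).mpr hs
    obtain ⟨g, hg⟩ := hX.factors
      (ModuleCat.ofHom (curryR (X := X) (N := N) f.hom) : X ⟶ HomRc N Y)
      (ModuleCat.ofHom (homRpost (B := B) N e.hom) : HomRc N Z ⟶ HomRc N Y)
    refine ⟨ModuleCat.ofHom (uncurryR (X := X) (N := N) g.hom), ?_⟩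
    ext1
    refine ttlin_ext fun x n => ?_
    change e.hom (g.hom x n) = f.hom (tm x n)
    have := congrArg (fun h => h.hom x) hg
    exact congrArg (fun h : HomR N Y => h n) this
end HomR

section HomL
/-- Left linear maps `X → Y`. -/
def HomL (X : ModuleCat.{u} (A ⊗[K] B)) (Y : ModuleCat.{u} (A ⊗[K] C)) : Type u := X →ₗ[A] Y

variable (X : ModuleCat.{u} (A ⊗[K] B)) (Y : ModuleCat.{u} (A ⊗[K] C))

instance : AddCommGroup (HomL X Y) := inferInstanceAs (AddCommGroup (X →ₗ[A] Y))
@[reducible] def homLC : Module C (HomL X Y) := inferInstanceAs (Module C (X →ₗ[A] Y))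
@[reducible] def homLK : Module K (HomL X Y) := inferInstanceAs (Module K (X →ₗ[A] Y))
instance : FunLike (HomL X Y) X Y := inferInstanceAs (FunLike (X →ₗ[A] Y) X Y)
variable {X Y}
@[ext] lemma homL_ext {f g : HomL X Y} (h : ∀ n, f n = g n) : f = g := LinearMap.ext h
lemma homL_map_add (f : HomL X Y) (n m : X) : f (n + m) = f n + f m := LinearMap.map_add _ _ _
lemma homL_map_zero (f : HomL X Y) : f 0 = 0 := LinearMap.map_zero _
lemma homL_map_smul (f : HomL X Y) (c : A) (n : X) : f (c • n) = c • f n := LinearMap.map_smul _ _ _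
attribute [local instance] homLC homLK
variable (X Y)
@[reducible] def homLB : Module B (HomL X Y) where
  smul b f := LinearMap.comp (show X →ₗ[A] Y from f) (Module.toModuleEnd A (S := B) X b)
  one_smul f := by ext n; change f ((1 : B) • n) = f n; rw [one_smul]
  mul_smul b b' f := by
    ext n; change f ((b * b') • n) = f (b' • b • n); rw [mul_comm, mul_smul]
  smul_zero b := rfl
  smul_add b f g := rfl
  add_smul b b' f := by
    ext n; change f ((b + b') • n) = f (b • n) + f (b' • n); rw [add_smul, homL_map_add]
  zero_smul f := by
    ext n; change f ((0 : B) • n) = 0; rw [zero_smul, homL_map_zero]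
attribute [local instance] homLB
variable {X Y}
lemma homLC_apply (a : C) (f : HomL X Y) (n : X) : (a • f) n = a • f n := rfl
lemma homLK_apply (a : K) (f : HomL X Y) (n : X) : (a • f) n = a • f n := rfl
lemma homLB_apply (b : B) (f : HomL X Y) (n : X) : (b • f) n = f (b • n) := rfl

instance : IsScalarTower K C (HomL X Y) where
  smul_assoc k a f := by ext n; simp only [homLC_apply, homLK_apply, smul_assoc]
instance : IsScalarTower K B (HomL X Y) where
  smul_assoc k b f := by
    ext n
    rw [homLB_apply, homLK_apply, homLB_apply, smul_assoc, ← algebraMap_smul A k (b • n),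
      homL_map_smul, algebraMap_smul]
instance : SMulCommClass B C (HomL X Y) where
  smul_comm _ _ _ := rfl
instance homLMod : Module (B ⊗[K] C) (HomL X Y) := TensorProduct.Algebra.module

variable (X) in
abbrev HomLc (Y : ModuleCat.{u} (A ⊗[K] C)) : ModuleCat.{u} (B ⊗[K] C) := ModuleCat.of _ (HomL X Y)

lemma homL_smulL (b : B) (f : HomL X Y) (n : X) : ((b ⊗ₜ[K] (1 : C)) • f) n = f (b • n) := by
  change (1 : C) • f (b • n) = _
  rw [one_smul]
lemma homL_smulR (c : C) (f : HomL X Y) (n : X) : (((1 : B) ⊗ₜ[K] c) • f) n = c • f n := by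
  change c • f ((1 : B) • n) = _
  rw [one_smul]

variable (X) in
/-- postcomposition -/
def homLpost {Y Z : ModuleCat.{u} (A ⊗[K] C)} (g : Y →ₗ[A ⊗[K] C] Z) :
    HomL X Y →ₗ[B ⊗[K] C] HomL X Z :=
  mkLin (K := K) (A := B) (B := C)
    { toFun := fun f => (linL g).comp (show X →ₗ[A] Y from f)
      map_zero' := by ext n; exact g.map_zero
      map_add' := fun f f' => by ext n; exact g.map_add _ _ }
    (fun a f => by
      ext n
      change g (((a ⊗ₜ[K] (1 : C)) • f) n) = _
      rw [homL_smulL, homL_smulL]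
      rfl)
    (fun a f => by
      ext n
      change g ((((1 : B) ⊗ₜ[K] a) • f) n) = _
      rw [homL_smulR, homL_smulR]
      exact lin_smulR g a _)

lemma homLpost_apply {Y Z : ModuleCat.{u} (A ⊗[K] C)} (g : Y →ₗ[A ⊗[K] C] Z) (f : HomL X Y) (n : X) :
  homLpost X (B := B) g f n = g (f n) := rfl

lemma homLpost_surj {Y Z : ModuleCat.{u} (A ⊗[K] C)} [Module.Projective A X]
    (g : Y →ₗ[A ⊗[K] C] Z) (hg : Function.Surjective g) :
    Function.Surjective (homLpost X (B := B) g) := by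
  intro f
  obtain ⟨h, hh⟩ := Module.projective_lifting_property (linL g) (show X →ₗ[A] Z from f) hg
  exact ⟨h, hh⟩

/-- currying -/
def curryL (f : TT X N →ₗ[A ⊗[K] C] Y) : N →ₗ[B ⊗[K] C] HomL X Y :=
  mkLin (K := K) (A := B) (B := C)
    { toFun := fun n => (show X →ₗ[A] Y from
        { toFun := fun x => f (tm x n)
          map_add' := fun n n' => by rw [tm_addl, map_add]
          map_smul' := fun c n => by
            rw [RingHom.id_apply, smulL_def Y, ← f.map_smul, tt_smul_tm, one_smul] })
      map_zero' := by
        ext x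
        change f (tm x 0) = 0
        rw [show (tm x 0 : TT X N) = 0 from TensorProduct.tmul_zero _ _, map_zero]
      map_add' := fun n n' => by
        ext x
        change f (tm x _) = f (tm x n) + f (tm x n')
        rw [tm_addr, map_add] }
    (fun b n => by
      ext x
      rw [homL_smulL]
      change f (tm x (b • n)) = f (tm (b • x) n)
      rw [tm_bal])
    (fun c n => by
      ext x
      rw [homL_smulR, smulR_def Y]
      change f (tm x (c • n)) = ((1 : A) ⊗ₜ[K] c) • f (tm x n)
      rw [← f.map_smul, tt_smul_tm, one_smul])

lemma curryL_apply (f : TT X N →ₗ[A ⊗[K] C] Y) (x : X) (n : N) : curryL f n x = f (tm x n) := rfl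

def uncurryL0 (f : N →ₗ[B ⊗[K] C] HomL X Y) : TT X N →+ Y :=
  ttLift
    (AddMonoidHom.flip
    { toFun := fun n => (show X →ₗ[A] Y from f n).toAddMonoidHom
      map_zero' := by rw [map_zero]; rfl
      map_add' := fun x x' => by rw [map_add]; rfl })
    (fun b x n => by
      change f n (b • x) = f ((b ⊗ₜ[K] (1 : C)) • n) x
      rw [f.map_smul, homL_smulL])

lemma uncurryL0_tm (f : N →ₗ[B ⊗[K] C] HomL X Y) (x : X) (n : N) :
    uncurryL0 f (tm x n) = f n x := rfl

def uncurryL (f : N →ₗ[B ⊗[K] C] HomL X Y) : TT X N →ₗ[A ⊗[K] C] Y :=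
  mkLin (K := K) (A := A) (B := C) (uncurryL0 f)
    (fun a t => by
      induction t using tt_ind with
      | h0 => rw [smul_zero, map_zero, smul_zero]
      | ha s t hs ht => rw [smul_add, map_add, hs, ht, map_add, smul_add]
      | ht x n =>
        rw [tt_smul_tm, uncurryL0_tm, uncurryL0_tm, one_smul, homL_map_smul, smulL_def Y])
    (fun a t => by
      induction t using tt_ind with
      | h0 => rw [smul_zero, map_zero, smul_zero]
      | ha s t hs ht => rw [smul_add, map_add, hs, ht, map_add, smul_add]
      | ht x n =>
        rw [tt_smul_tm, uncurryL0_tm, uncurryL0_tm, one_smul, smulR_def N, f.map_smul, homL_smulR,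
          smulR_def Y])

lemma funR_proj (X : ModuleCat.{u} (A ⊗[K] B)) [Module.Projective A X] :
    (funR (C := C) X).PreservesProjectiveObjects where
  projective_obj {N} hN := by
    refine ⟨fun {Z Y} f e he => ?_⟩
    have hs := homLpost_surj (X := X) (B := B) e.hom ((ModuleCat.epi_iff_surjective e).mp he)
    have : Epi (ModuleCat.ofHom (homLpost (B := B) X e.hom) : HomLc X Z ⟶ HomLc X Y) :=
      (ModuleCat.epi_iff_surjective _).mpr hs
    obtain ⟨g, hg⟩ := hN.factors
      (ModuleCat.ofHom (curryL (X := X) (N := N) f.hom) : N ⟶ HomLc X Y)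
      (ModuleCat.ofHom (homLpost (B := B) X e.hom) : HomLc X Z ⟶ HomLc X Y)
    refine ⟨ModuleCat.ofHom (uncurryL (X := X) (N := N) g.hom), ?_⟩
    ext1
    refine ttlin_ext fun x n => ?_
    change e.hom (g.hom n x) = f.hom (tm x n)
    have := congrArg (fun h => h.hom n) hg
    exact congrArg (fun h : HomL X Y => h x) this
end HomL

section Univ
lemma univ_iso (M : ModuleCat.{u} (A ⊗[K] B)) (N : ModuleCat.{u} (B ⊗[K] C))
    (P : Type u) [AddCommGroup P] [Module (A ⊗[K] C) P]
    (φ : M → N → P)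
    (hφ₁ : ∀ x x' y, φ (x + x') y = φ x y + φ x' y)
    (hφ₂ : ∀ x y y', φ x (y + y') = φ x y + φ x y')
    (hφ₃ : ∀ (r : A) x y, φ ((r ⊗ₜ[K] (1 : B)) • x) y = (r ⊗ₜ[K] (1 : C)) • φ x y)
    (hφ₄ : ∀ (r : C) x y, φ x (((1 : B) ⊗ₜ[K] r) • y) = ((1 : A) ⊗ₜ[K] r) • φ x y)
    (hφ₅ : ∀ (r : B) x y, φ (((1 : A) ⊗ₜ[K] r) • x) y = φ x ((r ⊗ₜ[K] (1 : C)) • y))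
    (hφuniv : ∀ (Q : Type u) [AddCommGroup Q] [Module (A ⊗[K] C) Q]
      (ψ : M → N → Q),
      (∀ x x' y, ψ (x + x') y = ψ x y + ψ x' y) →
      (∀ x y y', ψ x (y + y') = ψ x y + ψ x y') →
      (∀ (r : A) x y, ψ ((r ⊗ₜ[K] (1 : B)) • x) y = (r ⊗ₜ[K] (1 : C)) • ψ x y) →
      (∀ (r : C) x y, ψ x (((1 : B) ⊗ₜ[K] r) • y) = ((1 : A) ⊗ₜ[K] r) • ψ x y) →
      (∀ (r : B) x y, ψ (((1 : A) ⊗ₜ[K] r) • x) y = ψ x ((r ⊗ₜ[K] (1 : C)) • y)) →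
      ∃! g : P →ₗ[A ⊗[K] C] Q, ∀ x y, g (φ x y) = ψ x y) :
    Nonempty (ModuleCat.of (A ⊗[K] C) P ≅ TTc M N) := by
  obtain ⟨g, hg, -⟩ := hφuniv (TT M N) (fun x y => tm x y) tm_addl tm_addr
    (fun r x y => by rw [tt_smul_tm, one_smul]; rfl)
    (fun r x y => by rw [tt_smul_tm, one_smul]; rfl)
    (fun r x y => tm_bal r x y)
  let h0 : TT M N →+ P := ttLift
    (AddMonoidHom.mk' (fun x => AddMonoidHom.mk' (fun y => φ x y) (hφ₂ x))
      (fun x x' => by ext y; exact hφ₁ x x' y)) (fun b x n => hφ₅ b x n)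
  have h0tm : ∀ x y, h0 (tm x y) = φ x y := fun x y => rfl
  let h : TT M N →ₗ[A ⊗[K] C] P := mkLin (K := K) (A := A) (B := C) h0
    (fun a t => by
      induction t using tt_ind with
      | h0 => rw [smul_zero, map_zero, smul_zero]
      | ha s t hs ht => rw [smul_add, map_add, hs, ht, map_add, smul_add]
      | ht x n => rw [tt_smul_tm, h0tm, h0tm, one_smul]; exact hφ₃ a x n)
    (fun a t => by
      induction t using tt_ind with
      | h0 => rw [smul_zero, map_zero, smul_zero]
      | ha s t hs ht => rw [smul_add, map_add, hs, ht, map_add, smul_add]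
      | ht x n => rw [tt_smul_tm, h0tm, h0tm, one_smul]; exact hφ₄ a x n)
  have htm : ∀ x y, h (tm x y) = φ x y := fun x y => rfl
  obtain ⟨i, hi, hi'⟩ := hφuniv P φ hφ₁ hφ₂ hφ₃ hφ₄ hφ₅
  have e1 : h.comp g = LinearMap.id := by
    rw [hi' (h.comp g) (fun x y => by rw [LinearMap.comp_apply, hg, htm]),
      hi' LinearMap.id (fun x y => rfl)]
  have e2 : g.comp h = LinearMap.id :=
    ttlin_ext fun x n => by rw [LinearMap.comp_apply, htm, hg]; rfl
  exact ⟨(LinearEquiv.ofLinearMap g h e2 e1).toModuleIso⟩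
end Univ

section Cyc

variable (K A) in
@[reducible] def mulModInst : Module (A ⊗[K] A) A :=
  (Algebra.TensorProduct.lmul' K (S := A)).toRingHom.toModule

attribute [local instance] mulModInst

lemma mulMod_smul (a b c : A) : (a ⊗ₜ[K] b) • c = a * b * c := by
  change (Algebra.TensorProduct.lmul' K (S := A)) (a ⊗ₜ b) * c = _
  rw [Algebra.TensorProduct.lmul'_apply_tmul]

variable (X : ModuleCat.{u} (A ⊗[K] B)) (N : ModuleCat.{u} (B ⊗[K] A))

/-- the zeroth Hochschild homology of `X ⊗ N` -/
abbrev HZ : Type u := A ⊗[A ⊗[K] A] (TT X N)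

variable {X N}
def hz (a : A) (t : TT X N) : HZ X N := a ⊗ₜ[A ⊗[K] A] t

lemma hz_smul (a c d : A) (t : TT X N) : hz (c * d * a) t = hz a ((c ⊗ₜ[K] d) • t) := by
  unfold hz
  rw [← mulMod_smul (K := K), TensorProduct.smul_tmul]

lemma hz_tm (a c d : A) (x : X) (n : N) :
    hz (c * d * a) (tm x n) = hz a (tm (c • x) (d • n)) := by
  rw [hz_smul, tt_smul_tm]

lemma hz_rot (d : A) (x : X) (n : N) :
    hz (1 : A) (tm (d • x) n) = hz (1 : A) (tm x (d • n)) := by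
  have h1 := hz_tm (1 : A) d 1 x n
  have h2 := hz_tm (1 : A) 1 d x n
  rw [one_smul] at h1 h2
  rw [← h1, ← h2, mul_one, one_mul]

lemma hz_out (d : A) (x : X) (n : N) : hz (1 : A) (tm (d • x) n) = hz d (tm x n) := by
  have h1 := hz_tm (1 : A) d 1 x n
  rw [one_smul] at h1
  rw [← h1, mul_one, mul_one]

lemma hz_addl (a b : A) (t : TT X N) : hz (a + b) t = hz a t + hz b t := TensorProduct.add_tmul _ _ _
lemma hz_addr (a : A) (s t : TT X N) : hz a (s + t) = hz a s + hz a t := TensorProduct.tmul_add _ _ _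

def cyc1 (a : A) : TT X N →+ HZ N X :=
  ttLift
    (AddMonoidHom.mk' (fun x => AddMonoidHom.mk' (fun n => hz (1 : B) (tm n (a • x)))
        (fun n n' => by rw [tm_addl, hz_addr]))
      (fun x x' => by
        ext n
        change hz (1 : B) (tm n (a • (x + x'))) = hz (1 : B) (tm n (a • x)) + hz (1 : B) (tm n (a • x'))
        rw [smul_add, tm_addr, hz_addr]))
    (fun b x n => by
      change hz (1 : B) (tm n (a • b • x)) = hz (1 : B) (tm (b • n) (a • x))
      rw [smul_comm a b x, hz_rot])

lemma cyc1_tm (a : A) (x : X) (n : N) : cyc1 a (tm x n) = hz (1 : B) (tm n (a • x)) := rfl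

lemma cyc1_add (a a' : A) : (cyc1 (a + a') : TT X N →+ HZ N X) = cyc1 a + cyc1 a' :=
  tt_ext fun x n => by
    rw [AddMonoidHom.add_apply, cyc1_tm, cyc1_tm, cyc1_tm, add_smul, tm_addr, hz_addr]

def cyc2 (X : ModuleCat.{u} (A ⊗[K] B)) (N : ModuleCat.{u} (B ⊗[K] A)) :
    A →+ TT X N →+ HZ N X :=
  AddMonoidHom.mk' (fun a => cyc1 a) cyc1_add

def cyc (X : ModuleCat.{u} (A ⊗[K] B)) (N : ModuleCat.{u} (B ⊗[K] A)) : HZ X N →+ HZ N X :=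
  TensorProduct.liftAddHom (R := A ⊗[K] A) (M := A) (N := TT X N)
    (cyc2 X N)
    (fun s a t => by
      change cyc1 (s • a) t = cyc1 a (s • t)
      induction s using TensorProduct.induction_on generalizing a t with
      | zero =>
        rw [zero_smul, zero_smul, map_zero]
        induction t using tt_ind with
        | h0 => rw [map_zero]
        | ha s t hs ht => rw [map_add, hs, ht, add_zero]
        | ht x n =>
          rw [cyc1_tm, zero_smul, show (tm n 0 : TT N X) = 0 from TensorProduct.tmul_zero _ _]
          exact TensorProduct.tmul_zero _ _
      | add s s' hs hs' =>
        rw [add_smul, add_smul, map_add, ← hs, ← hs']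
        induction t using tt_ind with
        | h0 => simp only [map_zero, add_zero]
        | ha s t hs ht => rw [map_add, hs, ht, map_add, map_add]; abel
        | ht x n => rw [cyc1_tm, cyc1_tm, cyc1_tm, add_smul, tm_addr, hz_addr]
      | tmul c d =>
        rw [mulMod_smul]
        induction t using tt_ind with
        | h0 => rw [map_zero, smul_zero, map_zero]
        | ha s t hs ht => rw [map_add, hs, ht, smul_add, map_add]
        | ht x n =>
          rw [tt_smul_tm, cyc1_tm, cyc1_tm, tm_bal, smul_smul, smul_smul]
          congr 3
          ring)

lemma cyc_apply (a : A) (t : TT X N) : cyc X N (hz a t) = cyc1 a t := rfl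

lemma hz_ext {Q : Type u} [AddCommGroup Q] {f g : HZ X N →+ Q}
    (h : ∀ a x n, f (hz a (tm x n)) = g (hz a (tm x n))) : f = g := by
  ext z
  induction z using TensorProduct.induction_on with
  | zero => rw [map_zero, map_zero]
  | add s t hs ht => rw [map_add, hs, ht, map_add]
  | tmul a t =>
    change f (hz a t) = g (hz a t)
    induction t using tt_ind with
    | h0 => rw [show (hz a (0 : TT X N)) = 0 from TensorProduct.tmul_zero _ _, map_zero, map_zero]
    | ha s t hs ht => rw [hz_addr, map_add, hs, ht, map_add]
    | ht x n => exact h a x n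

lemma cyc_cyc : (cyc N X).comp (cyc X N) = AddMonoidHom.id _ :=
  hz_ext fun a x n => by
    rw [AddMonoidHom.comp_apply, cyc_apply, cyc1_tm, cyc_apply, cyc1_tm, one_smul, hz_out]
    rfl

variable (K A) in
abbrev mulMod : ModuleCat.{u} (A ⊗[K] A) := ModuleCat.of (A ⊗[K] A) A

variable (K A) in
/-- the functor `A ⊗ -` to abelian groups -/
abbrev hzFun : ModuleCat.{u} (A ⊗[K] A) ⥤ AddCommGrpCat.{u} :=
  (MonoidalCategory.tensoringLeft (ModuleCat.{u} (A ⊗[K] A))).obj (mulMod K A) ⋙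
    forget₂ (ModuleCat.{u} (A ⊗[K] A)) AddCommGrpCat.{u}

def cycIso (X : ModuleCat.{u} (A ⊗[K] B)) (N : ModuleCat.{u} (B ⊗[K] A)) :
    AddCommGrpCat.of (HZ X N) ≅ AddCommGrpCat.of (HZ N X) where
  hom := AddCommGrpCat.ofHom (cyc X N)
  inv := AddCommGrpCat.ofHom (cyc N X)
  hom_inv_id := by ext1; exact cyc_cyc
  inv_hom_id := by ext1; exact cyc_cyc

def cycNat (N : ModuleCat.{u} (B ⊗[K] A)) :
    funL (A := A) N ⋙ hzFun K A ≅ funR (C := B) N ⋙ hzFun K B :=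
  NatIso.ofComponents (fun X => cycIso X N) (fun {X Y} f => by
    ext1
    exact hz_ext (X := X) (N := N) fun a x n => by
      change hz (1 : B) (tm n (a • f.hom x)) = hz (1 : B) (tm n (f.hom (a • x)))
      rw [lin_smulL f.hom])

/-- Tor as homology of a complex of abelian groups. -/
def torIso {S : Type u} [CommRing S] (U Z : ModuleCat.{u} S) (Q : ProjectiveResolution Z) (n : ℕ) :
    (forget₂ (ModuleCat.{u} S) AddCommGrpCat.{u}).obj (((Tor (ModuleCat.{u} S) n).obj U).obj Z) ≅
      ((((MonoidalCategory.tensoringLeft (ModuleCat.{u} S)).obj U ⋙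
        forget₂ (ModuleCat.{u} S) AddCommGrpCat.{u}).mapHomologicalComplex _).obj
          Q.complex).homology n :=
  (forget₂ (ModuleCat.{u} S) AddCommGrpCat.{u}).mapIso
    (Q.isoLeftDerivedObj ((MonoidalCategory.tensoringLeft (ModuleCat.{u} S)).obj U) n) ≪≫
  (ShortComplex.mapHomologyIso (HomologicalComplex.sc
    ((((MonoidalCategory.tensoringLeft (ModuleCat.{u} S)).obj U).mapHomologicalComplex _).obj
      Q.complex) n)
    (forget₂ (ModuleCat.{u} S) AddCommGrpCat.{u})).symm

lemma main_general (M : ModuleCat.{u} (A ⊗[K] B)) (N : ModuleCat.{u} (B ⊗[K] A))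
    (hl : Module.Projective B N) (hr : Module.Projective A N) (n : ℕ) :
    Nonempty ((((Tor (ModuleCat.{u} (A ⊗[K] A)) n).obj (mulMod K A)).obj (TTc M N) : Type u) ≃+
      (((Tor (ModuleCat.{u} (B ⊗[K] B)) n).obj (mulMod K B)).obj (TTc N M) : Type u)) := by
  have := funL_exact (A := A) N
  have := funL_proj (A := A) N
  have := funR_exact (C := B) N
  have := funR_proj (C := B) N
  let Q := projectiveResolution M
  let e1 := torIso (mulMod K A) _ ((funL (A := A) N).mapProjectiveResolution Q) n
  let e2 := torIso (mulMod K B) _ ((funR (C := B) N).mapProjectiveResolution Q) n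
  let e3 := (HomologicalComplex.homologyFunctor _ _ n).mapIso
    ((NatIso.mapHomologicalComplex (cycNat (A := A) N) (ComplexShape.down ℕ)).app Q.complex)
  exact ⟨(e1 ≪≫ e3 ≪≫ e2.symm).addCommGroupIsoToAddEquiv⟩

lemma main_iso {S : Type u} [CommRing S] (U : ModuleCat.{u} S) (n : ℕ) {Z W : ModuleCat.{u} S} (e : Z ≅ W) :
    Nonempty ((((Tor (ModuleCat.{u} S) n).obj U).obj Z : Type u) ≃+
      (((Tor (ModuleCat.{u} S) n).obj U).obj W : Type u)) :=
  ⟨((((Tor (ModuleCat.{u} S) n).obj U).mapIso e).toLinearEquiv).toAddEquiv⟩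

end Cyc
end Bimod
end HHTrace
end

/-- let `K` be a field of characteristic `0`, `R` a commutative
`K`-algebra, and `M`, `N` `R`-bimodules (modules over `S = R ⊗_K R`), each
finitely generated projective as a left `R`-module (restriction along
`r ↦ r ⊗ 1`) and as a right `R`-module (restriction along `r ↦ 1 ⊗ r`).
Let `(P, φ)` be the bimodule tensor product `M ⊗_R N` — i.e. `φ : M → N → P` is
biadditive, compatible with the outer `S`-action, `R`-balanced
(`φ((1 ⊗ r) • x) y = φ x ((r ⊗ 1) • y)`) and universal among such pairings —
and let `(P', φ')` likewise be `N ⊗_R M`.  Then for every `n ≥ 0` there is an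
isomorphism of Hochschild homology groups
`HH_n(R, M ⊗_R N) ≅ HH_n(R, N ⊗_R M)`, where
`HH_n(R, -) = Tor_n^{R ⊗_K R}(R, -)` and `R` is an `R ⊗_K R`-module via the
multiplication map. -/
theorem hochschild_homology_trace_property
    (K : Type u) [Field K] [CharZero K]
    (R : Type u) [CommRing R] [Algebra K R]
    (M : Type u) [AddCommGroup M] [Module (TensorProduct K R R) M]
    (N : Type u) [AddCommGroup N] [Module (TensorProduct K R R) N]
    (hMleft :
      letI : Module R M := Module.compHom M (algebraMap R (TensorProduct K R R))
      Module.Finite R M ∧ Module.Projective R M)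
    (hMright :
      letI : Module R M := Module.compHom M
        (Algebra.TensorProduct.includeRight (R := K) (A := R) (B := R)).toRingHom
      Module.Finite R M ∧ Module.Projective R M)
    (hNleft :
      letI : Module R N := Module.compHom N (algebraMap R (TensorProduct K R R))
      Module.Finite R N ∧ Module.Projective R N)
    (hNright :
      letI : Module R N := Module.compHom N
        (Algebra.TensorProduct.includeRight (R := K) (A := R) (B := R)).toRingHom
      Module.Finite R N ∧ Module.Projective R N)
    -- `(P, φ)` is the bimodule tensor product `M ⊗_R N`:
    (P : Type u) [AddCommGroup P] [Module (TensorProduct K R R) P]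
    (φ : M → N → P)
    (hφ₁ : ∀ x x' y, φ (x + x') y = φ x y + φ x' y)
    (hφ₂ : ∀ x y y', φ x (y + y') = φ x y + φ x y')
    (hφ₃ : ∀ (r : R) x y, φ ((r ⊗ₜ[K] (1 : R)) • x) y = (r ⊗ₜ[K] (1 : R)) • φ x y)
    (hφ₄ : ∀ (r : R) x y, φ x (((1 : R) ⊗ₜ[K] r) • y) = ((1 : R) ⊗ₜ[K] r) • φ x y)
    (hφ₅ : ∀ (r : R) x y, φ (((1 : R) ⊗ₜ[K] r) • x) y = φ x ((r ⊗ₜ[K] (1 : R)) • y))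
    (hφuniv : ∀ (Q : Type u) [AddCommGroup Q] [Module (TensorProduct K R R) Q]
      (ψ : M → N → Q),
      (∀ x x' y, ψ (x + x') y = ψ x y + ψ x' y) →
      (∀ x y y', ψ x (y + y') = ψ x y + ψ x y') →
      (∀ (r : R) x y, ψ ((r ⊗ₜ[K] (1 : R)) • x) y = (r ⊗ₜ[K] (1 : R)) • ψ x y) →
      (∀ (r : R) x y, ψ x (((1 : R) ⊗ₜ[K] r) • y) = ((1 : R) ⊗ₜ[K] r) • ψ x y) →
      (∀ (r : R) x y, ψ (((1 : R) ⊗ₜ[K] r) • x) y = ψ x ((r ⊗ₜ[K] (1 : R)) • y)) →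
      ∃! g : P →ₗ[TensorProduct K R R] Q, ∀ x y, g (φ x y) = ψ x y)
    -- `(P', φ')` is the bimodule tensor product `N ⊗_R M`:
    (P' : Type u) [AddCommGroup P'] [Module (TensorProduct K R R) P']
    (φ' : N → M → P')
    (hφ'₁ : ∀ y y' x, φ' (y + y') x = φ' y x + φ' y' x)
    (hφ'₂ : ∀ y x x', φ' y (x + x') = φ' y x + φ' y x')
    (hφ'₃ : ∀ (r : R) y x, φ' ((r ⊗ₜ[K] (1 : R)) • y) x = (r ⊗ₜ[K] (1 : R)) • φ' y x)
    (hφ'₄ : ∀ (r : R) y x, φ' y (((1 : R) ⊗ₜ[K] r) • x) = ((1 : R) ⊗ₜ[K] r) • φ' y x)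
    (hφ'₅ : ∀ (r : R) y x, φ' (((1 : R) ⊗ₜ[K] r) • y) x = φ' y ((r ⊗ₜ[K] (1 : R)) • x))
    (hφ'univ : ∀ (Q : Type u) [AddCommGroup Q] [Module (TensorProduct K R R) Q]
      (ψ : N → M → Q),
      (∀ y y' x, ψ (y + y') x = ψ y x + ψ y' x) →
      (∀ y x x', ψ y (x + x') = ψ y x + ψ y x') →
      (∀ (r : R) y x, ψ ((r ⊗ₜ[K] (1 : R)) • y) x = (r ⊗ₜ[K] (1 : R)) • ψ y x) →
      (∀ (r : R) y x, ψ y (((1 : R) ⊗ₜ[K] r) • x) = ((1 : R) ⊗ₜ[K] r) • ψ y x) →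
      (∀ (r : R) y x, ψ (((1 : R) ⊗ₜ[K] r) • y) x = ψ y ((r ⊗ₜ[K] (1 : R)) • x)) →
      ∃! g : P' →ₗ[TensorProduct K R R] Q, ∀ y x, g (φ' y x) = ψ y x)
    (n : ℕ) :
    letI : Module (TensorProduct K R R) R :=
      (Algebra.TensorProduct.lmul' K (S := R)).toRingHom.toModule
    Nonempty
      (↥(((Tor (ModuleCat (TensorProduct K R R)) n).obj
            (ModuleCat.of (TensorProduct K R R) R)).obj
          (ModuleCat.of (TensorProduct K R R) P)) ≃+
        ↥(((Tor (ModuleCat (TensorProduct K R R)) n).obj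
            (ModuleCat.of (TensorProduct K R R) R)).obj
          (ModuleCat.of (TensorProduct K R R) P'))) := by
  obtain ⟨i1⟩ := HHTrace.univ_iso (K := K) (A := R) (B := R) (C := R)
    (ModuleCat.of _ M) (ModuleCat.of _ N) P φ hφ₁ hφ₂ hφ₃ hφ₄ hφ₅ hφuniv
  obtain ⟨i2⟩ := HHTrace.univ_iso (K := K) (A := R) (B := R) (C := R)
    (ModuleCat.of _ N) (ModuleCat.of _ M) P' φ' hφ'₁ hφ'₂ hφ'₃ hφ'₄ hφ'₅ hφ'univ
  obtain ⟨e⟩ := HHTrace.main_general (K := K) (A := R) (B := R)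
    (ModuleCat.of _ M) (ModuleCat.of _ N) hNleft.2 hNright.2 n
  obtain ⟨e1⟩ := HHTrace.main_iso (HHTrace.mulMod K R) n i1
  obtain ⟨e2⟩ := HHTrace.main_iso (HHTrace.mulMod K R) n i2
  exact ⟨e1.trans (e.trans e2.symm)⟩
end
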